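/- arXiv:2105.05139 — 13 statements merged into one kernel-verified Lean document; each statement's English description precedes it below -/
import Mathlib

section
/- Let n ≥ 1 and let V : ℝ → M_n(ℝ) be a differentiable matrix-valued function. Suppose there exist constant matrices Υ, Λ, Θ ∈ M_n(ℝ) such that for all t ∈ ℝ: V'(t) = [Υ, V(t)], t·V'(t) + 2·V(t) = [Λ, V(t)], and t²·V'(t) + 4t·V(t) = [Θ, V(t)]. Then V(t) = 0 for all t ∈ ℝ. (This is the algebraic core of the paper's theorem that the case k = 3 is impossible: no system x'' = V(t)x outside the equivalence orbit of the free-particle system admits three Lie-symmetry vector fields with linearly independent t-components.) -/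
theorem aux_core {E : Type*} [NormedAddCommGroup E] [NormedSpace ℝ E] [FiniteDimensional ℝ E]
    (A B C : E →ₗ[ℝ] E) (V : ℝ → E)
    (hd : ∀ t, HasDerivAt V (A (V t)) t)
    (h2 : ∀ t : ℝ, t • A (V t) + (2 : ℝ) • V t = B (V t))
    (h3 : ∀ t : ℝ, (t ^ 2) • A (V t) + (4 * t) • V t = C (V t)) (t : ℝ) : V t = 0 := by
  have hL : ∀ (L : E →ₗ[ℝ] E) (f : ℝ → E) (f' : E) (t : ℝ), HasDerivAt f f' t →
      HasDerivAt (fun s => L (f s)) (L f') t := by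
    intro L f f' t h
    exact (LinearMap.toContinuousLinearMap L).hasFDerivAt.comp_hasDerivAt t h
  obtain ⟨W, hW0, hWs⟩ : ∃ W : ℕ → ℝ → E, (∀ t, W 0 t = V t) ∧
      ∀ k t, W (k+1) t = A (W k t) :=
    ⟨fun k t => (A ^ k) (V t), fun t => by simp, fun k t => by simp [pow_succ']⟩
  have hWd : ∀ k t, HasDerivAt (W k) (W (k+1) t) t := by
    intro k
    induction k with
    | zero =>
      intro t
      rw [hWs, hW0, show W 0 = V from funext hW0]
      exact hd t
    | succ k ih =>
      intro t
      rw [hWs (k+1), show W (k+1) = fun s => A (W k s) from funext (hWs k)]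
      have := hL A _ _ t (ih t)
      simpa [hWs] using this
  have e2 : ∀ (k : ℕ) (t : ℝ), t • W (k+1) t + ((k : ℝ) + 2) • W k t = B (W k t) := by
    intro k
    induction k with
    | zero => intro t; simpa [hWs, hW0] using h2 t
    | succ k ih =>
      intro t
      have d1 := hL B _ _ t (hWd k t)
      have d2 := ((hasDerivAt_id t).smul (hWd (k+1) t)).add
        ((hWd k t).const_smul ((k : ℝ) + 2))
      have d3 := d1.congr_of_eventuallyEq (f₁ := fun s => s • W (k+1) s + ((k : ℝ) + 2) • W k s)
        (Filter.Eventually.of_forall ih)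
      have := d2.unique d3
      rw [← this]
      simp only [id]
      push_cast
      module
  have e3 : ∀ (k : ℕ) (t : ℝ), (t^2) • W (k+2) t + (2 * (k+1) * t + 4 * t) • W (k+1) t
      + (((k:ℝ)+1) * k + 4 * (k+1)) • W k t = C (W (k+1) t) := by
    intro k
    have hsq : ∀ t : ℝ, HasDerivAt (fun s : ℝ => s ^ 2) (2 * t) t := fun t => by
      simpa using hasDerivAt_pow 2 t
    have hlin : ∀ c t : ℝ, HasDerivAt (fun s : ℝ => c * s) c t := fun c t => by
      simpa using (hasDerivAt_id t).const_mul c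
    induction k with
    | zero =>
      intro t
      have d1 := hL C _ _ t (hWd 0 t)
      have d2 := ((hsq t).smul (hWd 1 t)).add ((hlin 4 t).smul (hWd 0 t))
      have d3 := d1.congr_of_eventuallyEq (f₁ := fun s => (s^2) • W 1 s + (4 * s) • W 0 s)
        (Filter.Eventually.of_forall fun s => by simpa [hWs, hW0] using h3 s)
      have := d2.unique d3
      rw [← this]
      push_cast
      module
    | succ k ih =>
      intro t
      have d1 := hL C _ _ t (hWd (k+1) t)
      have d2 := (((hsq t).smul (hWd (k+2) t)).add
        ((hlin (2*(k+1)+4) t).smul (hWd (k+1) t))).add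
        ((hWd k t).const_smul (((k:ℝ)+1) * k + 4 * (k+1)))
      have d3 := d1.congr_of_eventuallyEq (f₁ := fun s => (s^2) • W (k+2) s
        + ((2 * (k+1)+4) * s) • W (k+1) s + (((k:ℝ)+1) * k + 4 * (k+1)) • W k s)
        (Filter.Eventually.of_forall fun s => by
          simp only [← ih s]; module)
      have := d2.unique d3
      rw [← this]
      push_cast
      module
  have hex : ∃ k, W k t = 0 := by
    by_contra! hne
    have hli := Module.End.eigenvectors_linearIndependent' (B - t • A)
      (fun k : ℕ => (k : ℝ) + 2) (fun a b h => by simpa using h) (fun k => W k t)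
      (fun k => by
        rw [Module.End.hasEigenvector_iff, Module.End.mem_eigenspace_iff]
        refine ⟨?_, hne k⟩
        simp [← e2, ← hWs])
    have := hli.finite
    exact not_finite ℕ
  obtain ⟨k, hk⟩ := hex
  rw [← hW0]
  induction k with
  | zero => exact hk
  | succ k ih =>
    apply ih
    have h := e3 k t
    rw [hWs (k+1), hk] at h
    simp only [map_zero, smul_zero, zero_add] at h
    refine (smul_eq_zero.1 h).resolve_left ?_
    positivity

/-- **Impossibility of the case `k = 3`.**
If a differentiable matrix-valued function `V : ℝ → M_n(ℝ)` (with derivative `V'`)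
satisfies, for constant matrices `Υ, Λ, Θ`, the three classifying conditions
`V' = [Υ, V]`, `t·V' + 2·V = [Λ, V]` and `t²·V' + 4t·V = [Θ, V]` for all `t`,
then `V ≡ 0`. -/
theorem case_k_eq_three_impossible (n : ℕ) (hn : 1 ≤ n)
    (V V' : ℝ → Matrix (Fin n) (Fin n) ℝ)
    (Υ Λ Θ : Matrix (Fin n) (Fin n) ℝ)
    (hdiff : ∀ (t : ℝ) (i j : Fin n), HasDerivAt (fun s => V s i j) (V' t i j) t)
    (h1 : ∀ t : ℝ, V' t = Υ * V t - V t * Υ)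
    (h2 : ∀ t : ℝ, t • V' t + (2 : ℝ) • V t = Λ * V t - V t * Λ)
    (h3 : ∀ t : ℝ, (t ^ 2) • V' t + (4 * t) • V t = Θ * V t - V t * Θ) :
    ∀ t : ℝ, V t = 0 := by
  letI : NormedAddCommGroup (Matrix (Fin n) (Fin n) ℝ) := Matrix.normedAddCommGroup
  letI : NormedSpace ℝ (Matrix (Fin n) (Fin n) ℝ) := Matrix.normedSpace
  let ad : Matrix (Fin n) (Fin n) ℝ → (Matrix (Fin n) (Fin n) ℝ →ₗ[ℝ] Matrix (Fin n) (Fin n) ℝ) :=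
    fun X => LinearMap.mulLeft ℝ X - LinearMap.mulRight ℝ X
  have had : ∀ X Y, ad X Y = X * Y - Y * X := fun X Y => rfl
  refine aux_core (ad Υ) (ad Λ) (ad Θ) V ?_ ?_ ?_
  · intro t
    rw [had, ← h1]
    exact hasDerivAt_pi.2 fun i => hasDerivAt_pi.2 fun j => hdiff t i j
  · intro t
    rw [had, had, ← h1, h2]
  · intro t
    rw [had, had, ← h1, h3]
end

section
/- Let n ≥ 2 and let V : ℝ → M_n(ℝ) be smooth, and suppose there exists t₀ ∈ ℝ such that V(t₀) is not a scalar multiple of the identity matrix E. Then any three smooth functions τ₁, τ₂, τ₃ : ℝ → ℝ, each of which admits a constant matrix Γᵢ ∈ M_n(ℝ) such that (τᵢ, Γᵢ) is a symmetry pair of V, are linearly dependent over ℝ. (Equivalently: the space of t-components of essential Lie-symmetry vector fields of the system x_tt = V(t)x has dimension at most 2.) -/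
/-- A pair `(τ, Γ)`, with `τ : ℝ → ℝ` smooth and `Γ` a constant `n × n` matrix, is a
*symmetry pair* of a matrix-valued function `V : ℝ → M_n(ℝ)` if
`τ(t)·V'(t) = [Γ, V(t)] − 2τ'(t)·V(t) + (1/2)τ'''(t)·E` for all `t ∈ ℝ`. -/
def IsSymmetryPair (n : ℕ) (V : ℝ → Matrix (Fin n) (Fin n) ℝ)
    (τ : ℝ → ℝ) (Γ : Matrix (Fin n) (Fin n) ℝ) : Prop :=
  ContDiff ℝ (⊤ : ℕ∞) τ ∧
    ∀ t : ℝ,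
      τ t • (Matrix.of fun i j => deriv (fun s => V s i j) t) =
        (Γ * V t - V t * Γ) - (2 * deriv τ t) • V t
          + (iteratedDeriv 3 τ t / 2) • (1 : Matrix (Fin n) (Fin n) ℝ)

structure SolODE (v w : ℝ → ℝ) (y y1 y2 : ℝ → ℝ) : Prop where
  h0 : ∀ t, HasDerivAt y (y1 t) t
  h1 : ∀ t, HasDerivAt y1 (y2 t) t
  h2 : ∀ t, HasDerivAt y2 (4 * v t * y1 t + 2 * w t * y t) t

theorem SolODE.forward {v w y y1 y2 : ℝ → ℝ} (h : SolODE v w y y1 y2)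
    (hv : Continuous v) (hw : Continuous w) (t₀ : ℝ)
    (z0 : y t₀ = 0) (z1 : y1 t₀ = 0) (z2 : y2 t₀ = 0) (t : ℝ) (ht : t₀ ≤ t) :
    y t = 0 ∧ y1 t = 0 ∧ y2 t = 0 := by
  obtain ⟨C, hC⟩ := (isCompact_Icc (a := t₀) (b := t)).exists_bound_of_continuousOn
    (f := fun s => 1 + 4 * |v s| + 2 * |w s|) (by fun_prop)
  have hd : ∀ s, HasDerivAt (fun s => (y s, y1 s, y2 s))
      (y1 s, y2 s, 4 * v s * y1 s + 2 * w s * y s) s := fun s =>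
    (h.h0 s).prodMk ((h.h1 s).prodMk (h.h2 s))
  have key := eq_zero_of_abs_deriv_le_mul_abs_self_of_eq_zero_right
    (f := fun s => (y s, y1 s, y2 s))
    (f' := fun s => (y1 s, y2 s, 4 * v s * y1 s + 2 * w s * y s)) (K := C) (a := t₀) (b := t)
    (fun s _ => (hd s).continuousAt.continuousWithinAt)
    (fun s _ => (hd s).hasDerivWithinAt) (by simp [z0, z1, z2]) (by
      intro s hs
      have hCs := hC s ⟨hs.1, hs.2.le⟩
      rw [Real.norm_eq_abs, abs_of_nonneg (by positivity)] at hCs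
      set N := ‖(y s, y1 s, y2 s)‖ with hN
      have hN0 : 0 ≤ N := norm_nonneg _
      have n0 : |y s| ≤ N := norm_fst_le (y s, y1 s, y2 s)
      have n12 : ‖(y1 s, y2 s)‖ ≤ N := norm_snd_le (y s, y1 s, y2 s)
      have n1 : |y1 s| ≤ N := (norm_fst_le (y1 s, y2 s)).trans n12
      have n2 : |y2 s| ≤ N := (norm_snd_le (y1 s, y2 s)).trans n12
      have hNC : (1 + 4 * |v s| + 2 * |w s|) * N ≤ C * N := by gcongr
      have a1 : 0 ≤ |v s| * N := by positivity
      have a2 : 0 ≤ |w s| * N := by positivity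
      have a3 : |v s| * |y1 s| ≤ |v s| * N := by gcongr
      have a4 : |w s| * |y s| ≤ |w s| * N := by gcongr
      simp only [Prod.norm_def, Real.norm_eq_abs]
      refine max_le (by nlinarith) (max_le (by nlinarith) ?_)
      refine (abs_add_le _ _).trans ?_
      simp only [abs_mul, Nat.abs_ofNat]
      nlinarith)
    t ⟨ht, le_rfl⟩
  simpa using key

theorem SolODE.unique {v w y y1 y2 : ℝ → ℝ} (h : SolODE v w y y1 y2)
    (hv : Continuous v) (hw : Continuous w) (t₀ : ℝ)
    (z0 : y t₀ = 0) (z1 : y1 t₀ = 0) (z2 : y2 t₀ = 0) (t : ℝ) :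
    y t = 0 ∧ y1 t = 0 ∧ y2 t = 0 := by
  rcases le_total t₀ t with ht | ht
  · exact h.forward hv hw t₀ z0 z1 z2 t ht
  · have hr : SolODE (fun s => v (-s)) (fun s => - w (-s)) (fun s => y (-s))
        (fun s => - y1 (-s)) (fun s => y2 (-s)) := by
      constructor
      · intro s
        have := (h.h0 (-s)).comp s (hasDerivAt_neg s)
        simpa [Function.comp_def] using this
      · intro s
        have := ((h.h1 (-s)).comp s (hasDerivAt_neg s)).neg
        simpa [Function.comp_def, Pi.neg_def] using this
      · intro s
        have := (h.h2 (-s)).comp s (hasDerivAt_neg s)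
        refine this.congr_deriv ?_
        ring
    have := hr.forward (by fun_prop) (by fun_prop) (-t₀) (by simpa) (by simpa) (by simpa) (-t)
      (by linarith)
    simpa using this

theorem SolODE.sum {v w : ℝ → ℝ} {y y1 y2 : Fin 3 → ℝ → ℝ}
    (h : ∀ i, SolODE v w (y i) (y1 i) (y2 i)) (c : Fin 3 → ℝ) :
    SolODE v w (fun t => ∑ i, c i * y i t) (fun t => ∑ i, c i * y1 i t)
      (fun t => ∑ i, c i * y2 i t) := by
  constructor
  · intro t
    exact HasDerivAt.fun_sum fun i _ => ((h i).h0 t).const_mul (c i)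
  · intro t
    exact HasDerivAt.fun_sum fun i _ => ((h i).h1 t).const_mul (c i)
  · intro t
    have := HasDerivAt.fun_sum (u := Finset.univ) fun i _ => ((h i).h2 t).const_mul (c i)
    refine this.congr_deriv ?_
    simp only [Fin.sum_univ_three]
    ring

theorem SolODE.bracket {v w x x1 x2 y y1 y2 z z1 z2 : ℝ → ℝ} (hx : SolODE v w x x1 x2)
    (hy : SolODE v w y y1 y2) (hz : SolODE v w z z1 z2)
    (hv : Continuous v) (hw : Continuous w) (hvw : ∀ t, HasDerivAt v (w t) t) (t₀ : ℝ) (k : ℝ)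
    (e0 : k * x t₀ = y t₀ * z1 t₀ - z t₀ * y1 t₀)
    (e1 : k * x1 t₀ = y t₀ * z2 t₀ - z t₀ * y2 t₀)
    (e2 : k * x2 t₀ = y1 t₀ * z2 t₀ - z1 t₀ * y2 t₀ + 4 * v t₀ * (y t₀ * z1 t₀ - z t₀ * y1 t₀))
    (t : ℝ) : y t * z1 t - z t * y1 t = k * x t ∧ y t * z2 t - z t * y2 t = k * x1 t := by
  have hs : SolODE v w (fun t => y t * z1 t - z t * y1 t - k * x t)
      (fun t => y t * z2 t - z t * y2 t - k * x1 t)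
      (fun t => y1 t * z2 t - z1 t * y2 t + 4 * v t * (y t * z1 t - z t * y1 t) - k * x2 t) := by
    constructor
    · intro t
      have := (((hy.h0 t).mul (hz.h1 t)).sub ((hz.h0 t).mul (hy.h1 t))).sub ((hx.h0 t).const_mul k)
      refine this.congr_deriv ?_
      ring
    · intro t
      have := (((hy.h0 t).mul (hz.h2 t)).sub ((hz.h0 t).mul (hy.h2 t))).sub ((hx.h1 t).const_mul k)
      refine this.congr_deriv ?_
      ring
    · intro t
      have := ((((hy.h1 t).mul (hz.h2 t)).sub ((hz.h1 t).mul (hy.h2 t))).add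
        (((hvw t).const_mul 4).mul
          (((hy.h0 t).mul (hz.h1 t)).sub ((hz.h0 t).mul (hy.h1 t))))).sub ((hx.h2 t).const_mul k)
      refine this.congr_deriv ?_
      simp only [Pi.sub_apply, Pi.mul_apply]
      ring
  obtain ⟨h0, h1, -⟩ := hs.unique hv hw t₀ (by linarith) (by linarith) (by linarith) t
  exact ⟨by linarith, by linarith⟩

section core
attribute [local instance 100] LieRing.ofAssociativeRing
variable {F : Type*} [NormedAddCommGroup F] [NormedSpace ℝ F] [FiniteDimensional ℝ F]

theorem bracket_action {W W1 W2 : ℝ → F} (hW : ∀ t, HasDerivAt W (W1 t) t)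
    (hW1 : ∀ t, HasDerivAt W1 (W2 t) t) {y y1 y2 z z1 z2 : ℝ → ℝ}
    (hy0 : ∀ t, HasDerivAt y (y1 t) t) (hy1 : ∀ t, HasDerivAt y1 (y2 t) t)
    (hz0 : ∀ t, HasDerivAt z (z1 t) t) (hz1 : ∀ t, HasDerivAt z1 (z2 t) t)
    (A B : F →ₗ[ℝ] F) (hA : ∀ t, A (W t) = y t • W1 t + (2 * y1 t) • W t)
    (hB : ∀ t, B (W t) = z t • W1 t + (2 * z1 t) • W t) (t : ℝ) :
    B (A (W t)) - A (B (W t)) =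
      (y t * z1 t - z t * y1 t) • W1 t + (2 * (y t * z2 t - z t * y2 t)) • W t := by
  have main : ∀ (y y1 y2 : ℝ → ℝ) (A : F →ₗ[ℝ] F), (∀ t, HasDerivAt y (y1 t) t) →
      (∀ t, HasDerivAt y1 (y2 t) t) → (∀ t, A (W t) = y t • W1 t + (2 * y1 t) • W t) →
      A (W1 t) = y t • W2 t + (3 * y1 t) • W1 t + (2 * y2 t) • W t := by
    intro y y1 y2 A hy0 hy1 hA
    have d1 : HasDerivAt (fun s => A (W s)) (A (W1 t)) t :=
      (LinearMap.toContinuousLinearMap A).hasFDerivAt.comp_hasDerivAt t (hW t)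
    have d2 := ((hy0 t).smul (hW1 t)).add (((hy1 t).const_mul 2).smul (hW t))
    have : (fun s => A (W s)) = (y • W1 + (fun s => 2 * y1 s) • W) := funext hA
    rw [this] at d1
    rw [d1.unique d2]
    module
  rw [hA, hB, map_add, map_add, map_smul, map_smul, map_smul, map_smul, hA, hB,
    main y y1 y2 A hy0 hy1 hA, main z z1 z2 B hz0 hz1 hB]
  module

theorem core {v w : ℝ → ℝ} (hv : Continuous v) (hw : Continuous w)
    (hvw : ∀ t, HasDerivAt v (w t) t)
    {W W1 W2 : ℝ → F} (hW : ∀ t, HasDerivAt W (W1 t) t)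
    (hW1 : ∀ t, HasDerivAt W1 (W2 t) t) {y y1 y2 : Fin 3 → ℝ → ℝ}
    (hy : ∀ i, SolODE v w (y i) (y1 i) (y2 i)) (A : Fin 3 → F →ₗ[ℝ] F)
    (hA : ∀ i t, A i (W t) = y i t • W1 t + (2 * y1 i t) • W t) (hli : LinearIndependent ℝ y)
    (t₀ : ℝ) : W t₀ = 0 := by
  by_contra hne
  -- surjectivity of jets
  let J : (Fin 3 → ℝ) →ₗ[ℝ] (Fin 3 → ℝ) :=
    Matrix.mulVecLin (Matrix.of ![fun i => y i t₀, fun i => y1 i t₀, fun i => y2 i t₀])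
  have hJ : ∀ c, J c = ![∑ i, c i * y i t₀, ∑ i, c i * y1 i t₀, ∑ i, c i * y2 i t₀] := by
    intro c
    ext k
    fin_cases k <;> simp [J, Matrix.mulVec, dotProduct, mul_comm]
  have hinj : Function.Injective J := by
    rw [injective_iff_map_eq_zero]
    intro c hc
    rw [hJ] at hc
    have q0 := congrFun hc 0
    have q1 := congrFun hc 1
    have q2 := congrFun hc 2
    have u := (SolODE.sum hy c).unique hv hw t₀ q0 q1 q2
    rw [Fintype.linearIndependent_iff] at hli
    ext i
    refine hli c ?_ i
    ext t
    simpa using (u t).1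
  have hsurj := LinearMap.injective_iff_surjective.1 hinj
  have ex : ∀ p q r : ℝ, ∃ (x x1 x2 : ℝ → ℝ) (B : F →ₗ[ℝ] F), SolODE v w x x1 x2 ∧
      (∀ t, B (W t) = x t • W1 t + (2 * x1 t) • W t) ∧ x t₀ = p ∧ x1 t₀ = q ∧ x2 t₀ = r := by
    intro p q r
    obtain ⟨c, hc⟩ := hsurj ![p, q, r]
    rw [hJ] at hc
    refine ⟨_, _, _, ∑ i, c i • A i, SolODE.sum hy c, ?_, congrFun hc 0, congrFun hc 1,
      congrFun hc 2⟩
    intro t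
    simp only [Fin.sum_univ_three, LinearMap.add_apply, LinearMap.smul_apply, hA]
    module
  obtain ⟨a, a1, a2, A1, ha, hA1, a_0, a_1, a_2⟩ := ex 1 0 (2 * v t₀)
  obtain ⟨b, b1, b2, A2, hb, hA2, b_0, b_1, b_2⟩ := ex 0 1 0
  obtain ⟨c, c1, c2, A3, hc, hA3, c_0, c_1, c_2⟩ := ex 0 0 2
  have r12 : ∀ t, A2 (A1 (W t)) - A1 (A2 (W t)) = A1 (W t) := by
    intro t
    obtain ⟨p, q⟩ := ha.bracket ha hb hv hw hvw t₀ 1 (by simp [*]) (by simp [*])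
      (by simp [*]; ring) t
    rw [bracket_action hW hW1 ha.h0 ha.h1 hb.h0 hb.h1 A1 A2 hA1 hA2, p, q, hA1]
    module
  have r13 : ∀ t, A3 (A1 (W t)) - A1 (A3 (W t)) = (2 : ℝ) • A2 (W t) := by
    intro t
    obtain ⟨p, q⟩ := hb.bracket ha hc hv hw hvw t₀ 2 (by simp [*]) (by simp [*])
      (by simp [*]) t
    rw [bracket_action hW hW1 ha.h0 ha.h1 hc.h0 hc.h1 A1 A3 hA1 hA3, p, q, hA2]
    module
  have r23 : ∀ t, A3 (A2 (W t)) - A2 (A3 (W t)) = A3 (W t) := by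
    intro t
    obtain ⟨p, q⟩ := hc.bracket hb hc hv hw hvw t₀ 1 (by simp [*]) (by simp [*])
      (by simp [*]) t
    rw [bracket_action hW hW1 hb.h0 hb.h1 hc.h0 hc.h1 A2 A3 hA2 hA3, p, q, hA3]
    module
  let S : Submodule ℝ F := Submodule.span ℝ (Set.range W)
  have hWS : ∀ t, W t ∈ S := fun t => Submodule.subset_span ⟨t, rfl⟩
  have hW1S : ∀ t, W1 t ∈ S := by
    intro t
    have h1 := range_deriv_subset_closure_span_image W dense_univ ⟨t, rfl⟩
    rw [(hW t).deriv, Set.image_univ] at h1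
    exact (Submodule.closed_of_finiteDimensional S).closure_subset h1
  have inv : ∀ (x x1 : ℝ → ℝ) (B : F →ₗ[ℝ] F),
      (∀ t, B (W t) = x t • W1 t + (2 * x1 t) • W t) → ∀ s ∈ S, B s ∈ S := by
    intro x x1 B hB s hs
    have : S ≤ S.comap B := by
      refine Submodule.span_le.2 ?_
      rintro _ ⟨t, rfl⟩
      simp only [Submodule.comap_coe, Set.mem_preimage, SetLike.mem_coe, hB]
      exact S.add_mem (S.smul_mem _ (hW1S t)) (S.smul_mem _ (hWS t))
    exact this hs
  have ext0 : ∀ (X : F →ₗ[ℝ] F), (∀ t, X (W t) = 0) → ∀ s ∈ S, X s = 0 := by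
    intro X hX s hs
    have : S ≤ LinearMap.ker X := by
      refine Submodule.span_le.2 ?_
      rintro _ ⟨t, rfl⟩
      exact hX t
    exact this hs
  have s12 : ∀ s ∈ S, A2 (A1 s) - A1 (A2 s) = A1 s := fun s hs => sub_eq_zero.1 <|
    ext0 (A2 ∘ₗ A1 - A1 ∘ₗ A2 - A1) (fun t => by simp [r12]) s hs
  have s13 : ∀ s ∈ S, A3 (A1 s) - A1 (A3 s) = (2 : ℝ) • A2 s := fun s hs => sub_eq_zero.1 <|
    ext0 (A3 ∘ₗ A1 - A1 ∘ₗ A3 - (2 : ℝ) • A2) (fun t => by simp [r13]) s hs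
  have s23 : ∀ s ∈ S, A3 (A2 s) - A2 (A3 s) = A3 s := fun s hs => sub_eq_zero.1 <|
    ext0 (A3 ∘ₗ A2 - A2 ∘ₗ A3 - A3) (fun t => by simp [r23]) s hs
  let R1 : Module.End ℝ S := A1.restrict (inv _ _ _ hA1)
  let R2 : Module.End ℝ S := A2.restrict (inv _ _ _ hA2)
  let R3 : Module.End ℝ S := A3.restrict (inv _ _ _ hA3)
  let m : S := ⟨W t₀, hWS t₀⟩
  have hm : m ≠ 0 := fun h => hne (congrArg Subtype.val h)
  have m2 : R2 m = (2 : ℝ) • m := by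
    apply Subtype.ext
    simp [R2, m, hA2, b_0, b_1]
  have m3 : R3 m = 0 := by
    apply Subtype.ext
    simp [R3, m, hA3, c_0, c_1]
  have T : IsSl2Triple (-(2 : ℝ) • R2) R3 (-R1) := by
    refine ⟨?_, ?_, ?_, ?_⟩
    · intro h
      have := congrArg (fun X : Module.End ℝ S => X m) h
      simp [m2, hm] at this
    · ext s
      have := s13 s s.2
      simp only [Ring.lie_def, two_nsmul, LinearMap.add_apply, Submodule.coe_add, R1, R2, R3, LinearMap.sub_apply, Module.End.mul_apply,
        LinearMap.neg_apply, LinearMap.smul_apply, map_neg, map_smul, Submodule.coe_sub,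
        Submodule.coe_neg, Submodule.coe_smul, LinearMap.coe_restrict_apply]
      rw [neg_smul, ← this]
      abel
    · ext s
      have := s23 s s.2
      simp only [Ring.lie_def, two_nsmul, LinearMap.add_apply, Submodule.coe_add, R1, R2, R3, LinearMap.sub_apply, Module.End.mul_apply,
        LinearMap.neg_apply, LinearMap.smul_apply, map_neg, map_smul, Submodule.coe_sub,
        Submodule.coe_neg, Submodule.coe_smul, LinearMap.coe_restrict_apply]
      rw [sub_eq_iff_eq_add.1 this]
      module
    · ext s
      have := s12 s s.2
      simp only [Ring.lie_def, two_nsmul, LinearMap.add_apply, Submodule.coe_add, R1, R2, R3, LinearMap.sub_apply, Module.End.mul_apply,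
        LinearMap.neg_apply, LinearMap.smul_apply, map_neg, map_smul, Submodule.coe_sub,
        Submodule.coe_neg, Submodule.coe_smul, LinearMap.coe_restrict_apply]
      rw [sub_eq_iff_eq_add.1 this]
      module
  have P : T.HasPrimitiveVectorWith m (-4 : ℝ) := by
    refine ⟨hm, ?_, ?_⟩
    · change -(2 : ℝ) • R2 m = _
      rw [m2]
      module
    · exact m3
  obtain ⟨k, hk⟩ := P.exists_nat
  have : (0 : ℝ) ≤ k := Nat.cast_nonneg k
  linarith

end core

section diff

theorem smooth_derivs {f : ℝ → ℝ} (hf : ContDiff ℝ (⊤ : ℕ∞) f) :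
    ContDiff ℝ (⊤ : ℕ∞) (deriv f) ∧ ∀ t, HasDerivAt f (deriv f t) t := by
  have := contDiff_infty_iff_deriv.1 hf
  exact ⟨this.2, fun t => (this.1 t).hasDerivAt⟩

attribute [local instance] Matrix.normedAddCommGroup Matrix.normedSpace

theorem main_aux (n : ℕ) (hn : 2 ≤ n)
    (V : ℝ → Matrix (Fin n) (Fin n) ℝ)
    (hV : ∀ i j : Fin n, ContDiff ℝ (⊤ : ℕ∞) fun t => V t i j)
    (t₀ : ℝ) (ht₀ : ∀ c : ℝ, V t₀ ≠ c • (1 : Matrix (Fin n) (Fin n) ℝ))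
    (τ : Fin 3 → ℝ → ℝ) (Γ : Fin 3 → Matrix (Fin n) (Fin n) ℝ)
    (hsym : ∀ i, IsSymmetryPair n V (τ i) (Γ i)) :
    ¬ LinearIndependent ℝ τ := by
  intro hli
  have hn0 : (n : ℝ) ≠ 0 := by
    have : n ≠ 0 := by omega
    exact_mod_cast this
  let D1 : ℝ → Matrix (Fin n) (Fin n) ℝ := fun t => Matrix.of fun i j => deriv (fun s => V s i j) t
  let D2 : ℝ → Matrix (Fin n) (Fin n) ℝ :=
    fun t => Matrix.of fun i j => deriv (deriv (fun s => V s i j)) t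
  have dV : ∀ t, HasDerivAt V (D1 t) t := fun t =>
    hasDerivAt_pi.2 fun i => hasDerivAt_pi.2 fun j => (smooth_derivs (hV i j)).2 t
  have dD1 : ∀ t, HasDerivAt D1 (D2 t) t := fun t =>
    hasDerivAt_pi.2 fun i => hasDerivAt_pi.2 fun j =>
      (smooth_derivs (smooth_derivs (hV i j)).1).2 t
  let v : ℝ → ℝ := fun t => (V t).trace / n
  let w : ℝ → ℝ := fun t => (D1 t).trace / n
  let w2 : ℝ → ℝ := fun t => (D2 t).trace / n
  have dv : ∀ t, HasDerivAt v (w t) t := fun t =>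
    (HasDerivAt.fun_sum fun i _ => (smooth_derivs (hV i i)).2 t).div_const _
  have dw : ∀ t, HasDerivAt w (w2 t) t := fun t =>
    (HasDerivAt.fun_sum fun i _ => (smooth_derivs (smooth_derivs (hV i i)).1).2 t).div_const _
  have i3 : ∀ i t, iteratedDeriv 3 (τ i) t = 4 * v t * deriv (τ i) t + 2 * w t * τ i t := by
    intro i t
    have h := congrArg Matrix.trace ((hsym i).2 t)
    simp only [Matrix.trace_add, Matrix.trace_sub, Matrix.trace_smul, Matrix.trace_one,
      Fintype.card_fin, Matrix.trace_mul_comm (Γ i) (V t), smul_eq_mul] at h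
    change τ i t * (D1 t).trace = _ at h
    simp only [v, w]
    field_simp
    linarith
  have key := core (F := Matrix (Fin n) (Fin n) ℝ) (v := v) (w := w)
    (continuous_iff_continuousAt.2 fun t => (dv t).continuousAt)
    (continuous_iff_continuousAt.2 fun t => (dw t).continuousAt) dv
    (W := fun t => V t - v t • (1 : Matrix (Fin n) (Fin n) ℝ))
    (W1 := fun t => D1 t - w t • (1 : Matrix (Fin n) (Fin n) ℝ))
    (W2 := fun t => D2 t - w2 t • (1 : Matrix (Fin n) (Fin n) ℝ))
    (fun t => (dV t).sub ((dv t).smul_const _)) (fun t => (dD1 t).sub ((dw t).smul_const _))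
    (y := τ) (y1 := fun i => deriv (τ i)) (y2 := fun i => deriv (deriv (τ i)))
    (fun i => by
      have s0 := smooth_derivs (hsym i).1
      have s1 := smooth_derivs s0.1
      have s2 := smooth_derivs s1.1
      refine ⟨s0.2, s1.2, fun t => ?_⟩
      rw [← i3]
      simpa [iteratedDeriv_succ, iteratedDeriv_zero] using s2.2 t)
    (fun i => LinearMap.mulLeft ℝ (Γ i) - LinearMap.mulRight ℝ (Γ i))
    (fun i t => by
      have h := (hsym i).2 t
      change τ i t • D1 t = _ at h
      rw [i3] at h
      simp only [LinearMap.sub_apply, LinearMap.mulLeft_apply, LinearMap.mulRight_apply, mul_sub,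
        sub_mul, Matrix.mul_smul, Matrix.smul_mul, mul_one, one_mul, smul_sub]
      rw [h]
      module) hli t₀
  exact ht₀ (v t₀) (sub_eq_zero.1 key)

end diff

/-- The space of `t`-components of essential Lie-symmetry vector fields of a system
`x_tt = V(t)x` with `V(t₀)` not a multiple of the identity has dimension at most `2`:
any three such `t`-components are linearly dependent. -/
theorem t_components_linearly_dependent (n : ℕ) (hn : 2 ≤ n)
    (V : ℝ → Matrix (Fin n) (Fin n) ℝ)
    (hV : ∀ i j : Fin n, ContDiff ℝ (⊤ : ℕ∞) fun t => V t i j)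
    (t₀ : ℝ) (ht₀ : ∀ c : ℝ, V t₀ ≠ c • (1 : Matrix (Fin n) (Fin n) ℝ))
    (τ : Fin 3 → ℝ → ℝ) (Γ : Fin 3 → Matrix (Fin n) (Fin n) ℝ)
    (hsym : ∀ i, IsSymmetryPair n V (τ i) (Γ i)) :
    ¬ LinearIndependent ℝ τ := by
  exact main_aux n hn V hV t₀ ht₀ τ Γ hsym
end

section
/- Let n ≥ 2 and let V : ℝ → M_n(ℝ) be smooth, and suppose there exists t₀ ∈ ℝ such that V(t₀) is not a scalar multiple of the identity matrix E. Then the real vector space of all symmetry pairs (τ, Γ) of V (a subspace of C^∞(ℝ, ℝ) × M_n(ℝ), since the symmetry-pair condition is linear in (τ, Γ)) has dimension at most n² − 2n + 4; equivalently, any n² − 2n + 5 symmetry pairs of V are linearly dependent over ℝ. (This is the essential part of the theorem that the maximal Lie invariance algebra of such a system x_tt = V(t)x has dimension at most n² + 4.) -/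
theorem aux_lin_ode {E : Type*} [NormedAddCommGroup E] [NormedSpace ℝ E]
    (A : ℝ → E →L[ℝ] E) (hA : Continuous A) (f : ℝ → E)
    (hf : ∀ t, HasDerivAt f (A t (f t)) t) (t₀ : ℝ) (h0 : f t₀ = 0) (t : ℝ) : f t = 0 := by
  obtain ⟨a, b, ht, ht₀⟩ : ∃ a b, t ∈ Set.Ioo a b ∧ t₀ ∈ Set.Ioo a b := by
    use (min (-|t|) (-|t₀|) - 1), (max |t| |t₀| + 1)
    grind
  obtain ⟨K, hK⟩ := (isCompact_Icc (a := a) (b := b)).exists_bound_of_continuousOn hA.continuousOn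
  have key := ODE_solution_unique_of_mem_Ioo (v := fun t x => A t x) (s := fun _ => Set.univ)
    (K := K.toNNReal) (f := f) (g := fun _ => 0) (t₀ := t₀) (a := a) (b := b)
    (fun s hs => by
      have h1 : ‖A s‖₊ ≤ K.toNNReal := by
        rw [← NNReal.coe_le_coe]
        exact (hK s ⟨hs.1.le, hs.2.le⟩).trans (Real.le_coe_toNNReal K)
      exact ((A s).lipschitz.weaken h1).lipschitzOnWith) ht₀
    (fun s _ => ⟨hf s, trivial⟩)
    (fun s _ => ⟨by simpa using hasDerivAt_const s (0 : E), trivial⟩) h0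
  exact key ht

theorem aux_ode3 (τ a b : ℝ → ℝ) (hτ : ContDiff ℝ (⊤ : ℕ∞) τ) (ha : Continuous a)
    (hb : Continuous b) (h : ∀ t, iteratedDeriv 3 τ t = a t * τ t + b t * deriv τ t)
    (t₀ : ℝ) (h0 : τ t₀ = 0) (h1 : deriv τ t₀ = 0) (h2 : deriv (deriv τ) t₀ = 0) : τ = 0 := by
  have hτ1 : ContDiff ℝ (⊤ : ℕ∞) (deriv τ) := by
    simpa using hτ.iterate_deriv 1
  have hτ2 : ContDiff ℝ (⊤ : ℕ∞) (deriv (deriv τ)) := by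
    simpa using hτ.iterate_deriv 2
  have d0 := hτ.differentiable (by simp)
  have d1 := hτ1.differentiable (by simp)
  have d2 := hτ2.differentiable (by simp)
  let p1 : ℝ × ℝ × ℝ →L[ℝ] ℝ := ContinuousLinearMap.fst ℝ ℝ (ℝ × ℝ)
  let q : ℝ × ℝ × ℝ →L[ℝ] ℝ × ℝ := ContinuousLinearMap.snd ℝ ℝ (ℝ × ℝ)
  let p2 : ℝ × ℝ × ℝ →L[ℝ] ℝ := (ContinuousLinearMap.fst ℝ ℝ ℝ).comp q
  let i3 : ℝ →L[ℝ] ℝ × ℝ × ℝ := (ContinuousLinearMap.inr ℝ ℝ (ℝ × ℝ)).comp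
    (ContinuousLinearMap.inr ℝ ℝ ℝ)
  let L0 : ℝ × ℝ × ℝ →L[ℝ] ℝ × ℝ × ℝ :=
    p2.prod (((ContinuousLinearMap.snd ℝ ℝ ℝ).comp q).prod 0)
  let A : ℝ → (ℝ × ℝ × ℝ →L[ℝ] ℝ × ℝ × ℝ) := fun t =>
    L0 + (a t • i3.comp p1 + b t • i3.comp p2)
  have hA : Continuous A := by
    fun_prop
  have key := aux_lin_ode A hA (fun t => (τ t, deriv τ t, deriv (deriv τ) t)) (fun t => by
    have e : A t (τ t, deriv τ t, deriv (deriv τ) t)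
        = (deriv τ t, deriv (deriv τ) t, deriv (deriv (deriv τ)) t) := by
      have h3 : iteratedDeriv 3 τ t = deriv (deriv (deriv τ)) t := by
        simp [iteratedDeriv_eq_iterate]
      rw [← h3, h t]
      simp [A, L0, p1, p2, q, i3]
    rw [e]
    exact (d0 t).hasDerivAt.prodMk ((d1 t).hasDerivAt.prodMk (d2 t).hasDerivAt)) t₀
    (by simp [h0, h1, h2])
  funext t
  exact congrArg Prod.fst (key t)

def auxCent {V : Type*} [AddCommGroup V] [Module ℝ V] (A : Module.End ℝ V) :
    Submodule ℝ (Module.End ℝ V) where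
  carrier := {B | ∀ x, A (B x) = B (A x)}
  add_mem' := by
    intro B C hB hC x
    simp [hB x, hC x]
  zero_mem' := by
    intro x
    simp
  smul_mem' := by
    intro c B hB x
    simp [hB x]

theorem aux_cent_finrank {V : Type*} [AddCommGroup V] [Module ℝ V] [FiniteDimensional ℝ V]
    (A : Module.End ℝ V) (hA : ∀ c : ℝ, A ≠ c • 1) :
    ∃ m : ℕ, Module.finrank ℝ V = m + 2 ∧
      Module.finrank ℝ (auxCent A) ≤ m * m + 2 * m + 2 := by
  obtain ⟨v, hv⟩ : ∃ v, LinearIndependent ℝ ![v, A v] := by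
    by_contra! hcon
    obtain ⟨c, hc⟩ := LinearMap.exists_eq_smul_id_of_forall_notLinearIndependent hcon
    exact hA c hc
  have hv0 : v ≠ 0 := by simpa using hv.ne_zero 0
  rw [LinearIndependent.pair_iff' hv0] at hv
  have hns : A v ∉ Submodule.span ℝ {v} := by
    rw [Submodule.mem_span_singleton]
    rintro ⟨a, ha⟩
    exact hv a ha
  obtain ⟨w0, hw0, hw0'⟩ := Submodule.exists_le_ker_of_notMem hns
  obtain ⟨w, hwv, hwA⟩ : ∃ w : V →ₗ[ℝ] ℝ, w v = 0 ∧ w (A v) = 1 := by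
    refine ⟨(w0 (A v))⁻¹ • w0, ?_, ?_⟩
    · have : v ∈ LinearMap.ker w0 := hw0' (Submodule.mem_span_singleton_self v)
      simp [LinearMap.mem_ker.1 this]
    · simp [hw0]
  let g : V →ₗ[ℝ] ℝ × ℝ := w.prod (w ∘ₗ A)
  have hg : LinearMap.range g = ⊤ := by
    rw [LinearMap.range_eq_top]
    rintro ⟨x, y⟩
    refine ⟨(y - x * w (A (A v))) • v + x • A v, ?_⟩
    simp [g, hwv, hwA]
  have hgr := LinearMap.finrank_range_add_finrank_ker g
  rw [hg, finrank_top] at hgr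
  simp only [Module.finrank_prod, Module.finrank_self] at hgr
  set K := LinearMap.ker g with hK
  refine ⟨Module.finrank ℝ K, by omega, ?_⟩
  let ψ : V × Module.Dual ℝ V →ₗ[ℝ] ℝ × ℝ :=
    g ∘ₗ LinearMap.fst _ _ _ -
      ((Module.Dual.eval ℝ V v).prod (Module.Dual.eval ℝ V (A v))) ∘ₗ LinearMap.snd _ _ _
  have hψ : LinearMap.range ψ = ⊤ := by
    rw [LinearMap.range_eq_top] at hg ⊢
    intro x
    obtain ⟨y, hy⟩ := hg x
    exact ⟨(y, 0), by simp [ψ, hy]⟩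
  have hψr := LinearMap.finrank_range_add_finrank_ker ψ
  rw [hψ, finrank_top] at hψr
  simp only [Module.finrank_prod, Module.finrank_self, Subspace.dual_finrank_eq] at hψr
  let Φ : auxCent A →ₗ[ℝ] V × Module.Dual ℝ V :=
    { toFun := fun B => (B.1 v, w ∘ₗ B.1)
      map_add' := by
        intro B C
        ext <;> simp
      map_smul' := by
        intro c B
        ext <;> simp }
  have hΦ : LinearMap.range Φ ≤ LinearMap.ker ψ := by
    rintro _ ⟨B, rfl⟩
    have := B.2 v
    simp [Φ, ψ, g, this]
  have hΦ1 := Submodule.finrank_mono hΦ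
  have hΦr := LinearMap.finrank_range_add_finrank_ker Φ
  have hmem : ∀ B : LinearMap.ker Φ, ∀ x, B.1.1 x ∈ K := by
    intro B x
    have h2 : w ∘ₗ B.1.1 = 0 := congrArg Prod.snd (LinearMap.mem_ker.1 B.2)
    have h3 : ∀ y, w (B.1.1 y) = 0 := fun y => LinearMap.congr_fun h2 y
    have h4 := B.1.2 x
    simp [hK, g, h3, h4]
  let R : LinearMap.ker Φ →ₗ[ℝ] (K →ₗ[ℝ] K) :=
    { toFun := fun B => (B.1.1 ∘ₗ K.subtype).codRestrict K (fun x => hmem B x)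
      map_add' := by
        intro B C
        rfl
      map_smul' := by
        intro c B
        rfl }
  have hR : Function.Injective R := by
    rw [injective_iff_map_eq_zero]
    intro B hB
    have h1 : B.1.1 v = 0 := congrArg Prod.fst (LinearMap.mem_ker.1 B.2)
    have h2 : B.1.1 (A v) = 0 := by rw [← B.1.2 v, h1, map_zero]
    have h3 : ∀ k ∈ K, B.1.1 k = 0 := fun k hk =>
      congrArg Subtype.val (LinearMap.congr_fun hB ⟨k, hk⟩)
    apply Subtype.ext
    apply Subtype.ext
    ext x
    have h4 := h3 (x - ((w (A x) - w x * w (A (A v))) • v + w x • A v)) (by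
      simp [hK, g, hwv, hwA])
    simpa [h1, h2] using h4
  have hRr := LinearMap.finrank_le_finrank_of_injective hR
  rw [Module.finrank_linearMap] at hRr
  omega

def auxSym (n : ℕ) (V : ℝ → Matrix (Fin n) (Fin n) ℝ) :
    Submodule ℝ ((ℝ → ℝ) × Matrix (Fin n) (Fin n) ℝ) where
  carrier := {p | IsSymmetryPair n V p.1 p.2}
  add_mem' := by
    rintro ⟨τ, Γ⟩ ⟨σ, Δ⟩ ⟨h1, h2⟩ ⟨h3, h4⟩
    refine ⟨h1.add h3, fun t => ?_⟩
    have e1 : deriv (τ + σ) t = deriv τ t + deriv σ t :=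
      deriv_add (h1.differentiable (by simp) t) (h3.differentiable (by simp) t)
    have e2 : iteratedDeriv 3 (τ + σ) t = iteratedDeriv 3 τ t + iteratedDeriv 3 σ t :=
      iteratedDeriv_add ((h1.of_le (WithTop.coe_le_coe.2 (le_top : ((3 : ℕ) : ℕ∞) ≤ ⊤))).contDiffAt)
        ((h3.of_le (WithTop.coe_le_coe.2 (le_top : ((3 : ℕ) : ℕ∞) ≤ ⊤))).contDiffAt)
    have h5 := h2 t
    have h6 := h4 t
    simp only [Prod.mk_add_mk] at h5 h6 ⊢
    rw [e1, e2, Pi.add_apply, add_smul, h5, h6, Matrix.add_mul, Matrix.mul_add]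
    module
  zero_mem' := by
    refine ⟨contDiff_const, fun t => ?_⟩
    have e1 : deriv (0 : ℝ → ℝ) t = 0 := by simp
    have e2 : iteratedDeriv 3 (0 : ℝ → ℝ) t = 0 := by simp [iteratedDeriv_eq_iterate]
    simp only [Prod.fst_zero, Prod.snd_zero]
    rw [e1, e2]
    simp
  smul_mem' := by
    rintro c ⟨τ, Γ⟩ ⟨h1, h2⟩
    refine ⟨h1.const_smul c, fun t => ?_⟩
    have e1 : deriv (c • τ) t = c * deriv τ t :=
      deriv_const_smul c (h1.differentiable (by simp) t)
    have e2 : iteratedDeriv 3 (c • τ) t = c * iteratedDeriv 3 τ t :=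
      iteratedDeriv_const_smul_field c τ
    have h5 := h2 t
    simp only [Prod.smul_mk] at h5 ⊢
    rw [e1, e2, Pi.smul_apply, smul_assoc, h5, Matrix.smul_mul, Matrix.mul_smul]
    module

theorem aux_comm (n : ℕ) (hn : 2 ≤ n) (V : ℝ → Matrix (Fin n) (Fin n) ℝ) (t₀ : ℝ)
    (τ : ℝ → ℝ) (Γ : Matrix (Fin n) (Fin n) ℝ) (h : IsSymmetryPair n V τ Γ)
    (h0 : τ t₀ = 0) (h1 : deriv τ t₀ = 0) : V t₀ * Γ = Γ * V t₀ := by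
  have h2 := h.2 t₀
  rw [h0, h1] at h2
  have h3 := congrArg Matrix.trace h2
  simp only [zero_smul, mul_zero, sub_zero, Matrix.trace_add, Matrix.trace_sub, Matrix.trace_zero,
    Matrix.trace_smul, Matrix.trace_one, Matrix.trace_mul_comm Γ, sub_self, zero_add,
    Fintype.card_fin, smul_eq_mul] at h3
  have hn0 : (n : ℝ) ≠ 0 := by
    have : n ≠ 0 := by omega
    exact_mod_cast this
  have h4 : iteratedDeriv 3 τ t₀ / 2 = 0 := by
    rcases mul_eq_zero.1 h3.symm with h | h
    · exact h
    · exact absurd h hn0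
  rw [h4] at h2
  simp only [zero_smul, mul_zero, sub_zero, add_zero] at h2
  exact (sub_eq_zero.1 h2.symm).symm

theorem aux_zero (n : ℕ) (hn : 2 ≤ n) (V : ℝ → Matrix (Fin n) (Fin n) ℝ)
    (hV : ∀ i j : Fin n, ContDiff ℝ (⊤ : ℕ∞) fun t => V t i j)
    (t₀ : ℝ) (ht₀ : ∀ c : ℝ, V t₀ ≠ c • (1 : Matrix (Fin n) (Fin n) ℝ))
    (τ : ℝ → ℝ) (h : IsSymmetryPair n V τ 0)
    (h0 : τ t₀ = 0) (h1 : deriv τ t₀ = 0) : τ = 0 := by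
  have hτ := h.1
  have hτ1 : ContDiff ℝ (⊤ : ℕ∞) (deriv τ) := by
    simpa using hτ.iterate_deriv 1
  have hτ3 : ContDiff ℝ (⊤ : ℕ∞) (iteratedDeriv 3 τ) := by
    rw [iteratedDeriv_eq_iterate]
    exact hτ.iterate_deriv 3
  have hV' : ∀ i j, ContDiff ℝ (⊤ : ℕ∞) (deriv fun t => V t i j) := fun i j => by
    simpa using (hV i j).iterate_deriv 1
  have eqn : ∀ i j t, τ t * deriv (fun s => V s i j) t =
      -(2 * deriv τ t * V t i j) + iteratedDeriv 3 τ t * ((1 : Matrix (Fin n) (Fin n) ℝ) i j / 2) := by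
    intro i j t
    have := congrFun (congrFun (h.2 t) i) j
    simp only [Matrix.smul_apply, Matrix.of_apply, Matrix.add_apply, Matrix.sub_apply,
      Matrix.zero_mul, Matrix.mul_zero, Matrix.zero_apply, smul_eq_mul] at this
    rw [this]
    ring
  have h2 : deriv (deriv τ) t₀ = 0 := by
    by_contra hne
    refine ht₀ (deriv (iteratedDeriv 3 τ) t₀ / (4 * deriv (deriv τ) t₀)) ?_
    ext i j
    have dτ := (hτ.differentiable (by simp) t₀).hasDerivAt
    have dτ1 := (hτ1.differentiable (by simp) t₀).hasDerivAt
    have dτ3 := (hτ3.differentiable (by simp) t₀).hasDerivAt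
    have dV := ((hV i j).differentiable (by simp) t₀).hasDerivAt
    have dV' := ((hV' i j).differentiable (by simp) t₀).hasDerivAt
    have l := dτ.mul dV'
    have r := (((dτ1.const_mul 2).mul dV).neg).add
      (dτ3.mul_const ((1 : Matrix (Fin n) (Fin n) ℝ) i j / 2))
    have heq := funext (eqn i j)
    have hu := l.unique (r.congr_of_eventuallyEq (Filter.Eventually.of_forall (eqn i j)))
    rw [h0, h1] at hu
    rw [Matrix.smul_apply, smul_eq_mul]
    field_simp
    linarith
  let i0 : Fin n := ⟨0, by omega⟩
  refine aux_ode3 τ (fun t => 2 * deriv (fun s => V s i0 i0) t) (fun t => 4 * V t i0 i0) hτ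
    (continuous_const.mul (hV' i0 i0).continuous) (continuous_const.mul (hV i0 i0).continuous)
    (fun t => ?_) t₀ h0 h1 h2
  have := eqn i0 i0 t
  rw [Matrix.one_apply_eq] at this
  linarith

/-- The space of symmetry pairs of a system `x_tt = V(t)x` with `V(t₀)` not a multiple of
the identity has dimension at most `n² − 2n + 4`: any `n² − 2n + 5` symmetry pairs are
linearly dependent over `ℝ`. -/
theorem symmetry_pairs_dimension_bound (n : ℕ) (hn : 2 ≤ n)
    (V : ℝ → Matrix (Fin n) (Fin n) ℝ)
    (hV : ∀ i j : Fin n, ContDiff ℝ (⊤ : ℕ∞) fun t => V t i j)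
    (t₀ : ℝ) (ht₀ : ∀ c : ℝ, V t₀ ≠ c • (1 : Matrix (Fin n) (Fin n) ℝ))
    (p : Fin (n ^ 2 - 2 * n + 5) → (ℝ → ℝ) × Matrix (Fin n) (Fin n) ℝ)
    (hp : ∀ i, IsSymmetryPair n V (p i).1 (p i).2) :
    ¬ LinearIndependent ℝ p := by
  intro hli
  let L := Fintype.linearCombination ℝ p
  have hL : Function.Injective L := hli.fintypeLinearCombination_injective
  have hmem : ∀ c, IsSymmetryPair n V (L c).1 (L c).2 := by
    intro c
    have : L c ∈ auxSym n V := by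
      simp only [L, Fintype.linearCombination_apply]
      exact Submodule.sum_mem _ fun i _ => Submodule.smul_mem _ _ (hp i)
    exact this
  have hdiff : ∀ c, Differentiable ℝ (L c).1 := fun c => (hmem c).1.differentiable (by simp)
  let F : (Fin (n ^ 2 - 2 * n + 5) → ℝ) →ₗ[ℝ] ℝ × ℝ :=
    { toFun := fun c => ((L c).1 t₀, deriv (L c).1 t₀)
      map_add' := by
        intro c d
        have : deriv ((L c).1 + (L d).1) t₀ = _ := deriv_add (hdiff c t₀) (hdiff d t₀)
        rw [map_add, Prod.fst_add, this]
        rfl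
      map_smul' := by
        intro a c
        have : deriv (a • (L c).1) t₀ = _ := deriv_const_smul a (hdiff c t₀)
        rw [map_smul, Prod.smul_fst, this]
        rfl }
  have hFr := LinearMap.finrank_range_add_finrank_ker F
  have hF2 := Submodule.finrank_le (LinearMap.range F)
  simp only [Module.finrank_prod, Module.finrank_self, Module.finrank_fin_fun] at hFr hF2
  let A : Module.End ℝ (Fin n → ℝ) := Matrix.toLin' (V t₀)
  have hA : ∀ c : ℝ, A ≠ c • 1 := by
    intro c hc
    apply ht₀ c
    apply Matrix.toLin'.injective
    rw [map_smul, Matrix.toLin'_one]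
    exact hc
  obtain ⟨m, hm, hC⟩ := aux_cent_finrank A hA
  rw [Module.finrank_fin_fun] at hm
  have hk0 : ∀ c : LinearMap.ker F, (L c.1).1 t₀ = 0 := fun c =>
    congrArg Prod.fst (LinearMap.mem_ker.1 c.2)
  have hk1 : ∀ c : LinearMap.ker F, deriv (L c.1).1 t₀ = 0 := fun c =>
    congrArg Prod.snd (LinearMap.mem_ker.1 c.2)
  let G0 : LinearMap.ker F →ₗ[ℝ] Module.End ℝ (Fin n → ℝ) :=
    (Matrix.toLin' (R := ℝ) (m := Fin n) (n := Fin n)).toLinearMap ∘ₗ LinearMap.snd ℝ (ℝ → ℝ) _ ∘ₗ L ∘ₗ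
      (LinearMap.ker F).subtype
  let G : LinearMap.ker F →ₗ[ℝ] auxCent A := G0.codRestrict _ (by
    intro c x
    have := aux_comm n hn V t₀ _ _ (hmem c.1) (hk0 c) (hk1 c)
    simp only [G0, A, LinearMap.comp_apply, LinearEquiv.coe_coe, Matrix.toLin'_apply,
      LinearMap.snd_apply, Submodule.subtype_apply, Matrix.mulVec_mulVec, this])
  have hG : Function.Injective G := by
    rw [injective_iff_map_eq_zero]
    intro c hc
    have h1 : Matrix.toLin' (L c.1).2 = 0 := congrArg Subtype.val hc
    have h2 : (L c.1).2 = 0 := by simpa using h1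
    have h3 := hmem c.1
    rw [h2] at h3
    have h4 := aux_zero n hn V hV t₀ ht₀ _ h3 (hk0 c) (hk1 c)
    apply Subtype.ext
    apply hL
    rw [ZeroMemClass.coe_zero, map_zero]
    exact Prod.ext h4 h2
  have hGr := LinearMap.finrank_le_finrank_of_injective hG
  have hN : n ^ 2 - 2 * n = m * m + 2 * m := by
    subst hm
    have : (m + 2) ^ 2 = m * m + 2 * m + 2 * (m + 2) := by ring
    omega
  omega
end

section
/- Let n ≥ 2 and let J ∈ M_n(ℝ) be the matrix whose (1,2) entry equals 1 and all of whose other entries equal 0. Then the real vector space of pairs (τ, Γ), with τ : ℝ → ℝ smooth and Γ ∈ M_n(ℝ) constant, satisfying [Γ, J] − 2τ'(t)·J + (1/2)τ'''(t)·E = 0 for all t ∈ ℝ (the symmetry-pair condition for the constant matrix-valued function V ≡ J), has dimension exactly n² − 2n + 4. (This shows that the submaximum bound n² + 4 for the dimension of the maximal Lie invariance algebra is attained by the system x¹_tt = x², x²_tt = 0, …, xⁿ_tt = 0.) -/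
/-- The `n × n` matrix `J` whose `(1,2)` entry (indices `0, 1` in `Fin n`) equals `1`
and all of whose other entries equal `0`. -/
def Jmat (n : ℕ) : Matrix (Fin n) (Fin n) ℝ :=
  Matrix.of fun i j => if (i : ℕ) = 0 ∧ (j : ℕ) = 1 then (1 : ℝ) else 0

/-- A pair `(τ, Γ)`, with `τ : ℝ → ℝ` smooth and `Γ` a constant matrix, satisfying the
symmetry-pair condition `[Γ, J] − 2τ'(t)·J + (1/2)τ'''(t)·E = 0` for the constant
matrix-valued function `V ≡ J`. -/
def IsJSymmetryPair (n : ℕ) (q : (ℝ → ℝ) × Matrix (Fin n) (Fin n) ℝ) : Prop :=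
  ContDiff ℝ (⊤ : ℕ∞) q.1 ∧
    ∀ t : ℝ,
      (q.2 * Jmat n - Jmat n * q.2) - (2 * deriv q.1 t) • Jmat n
        + (iteratedDeriv 3 q.1 t / 2) • (1 : Matrix (Fin n) (Fin n) ℝ) = 0

/-- The admissible entries of `Γ`. -/
def SPred (m : ℕ) (x : Fin (m+2) × Fin (m+2)) : Prop :=
  (x.2 = 0 → x.1 = 0) ∧ (x.1 = 1 → x.2 = 1)

instance (m : ℕ) : DecidablePred (SPred m) := fun x => by unfold SPred; infer_instance

/-- The pair determined by `Γ`. -/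
noncomputable def LMap (m : ℕ) : Matrix (Fin (m+2)) (Fin (m+2)) ℝ →ₗ[ℝ]
    (ℝ → ℝ) × Matrix (Fin (m+2)) (Fin (m+2)) ℝ where
  toFun G := (fun t => (G 0 0 - G 1 1) / 2 * t, G)
  map_add' A B := by
    ext <;> simp
    ring
  map_smul' c A := by
    ext <;> simp
    ring

/-- The basis. -/
noncomputable def PFam (m : ℕ) : Option {x // SPred m x} →
    (ℝ → ℝ) × Matrix (Fin (m+2)) (Fin (m+2)) ℝ
  | none => (fun _ => 1, 0)
  | some x => LMap m (Matrix.single x.1.1 x.1.2 1)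

lemma card_S (m : ℕ) : Fintype.card (Option {x // SPred m x}) = (m+2)^2 - 2*(m+2) + 4 := by
  rw [Fintype.card_option, Fintype.card_subtype, Finset.card_filter, Fintype.sum_prod_type]
  have h0 : ∀ y : Fin (m+2), (if SPred m (0, y) then 1 else 0) = 1 := by
    intro y; simp [SPred]
  have h1 : ∀ y : Fin (m+2), (if SPred m (Fin.succ 0, y) then 1 else 0) = if y = 1 then 1 else 0 := by
    intro y
    by_cases h : y = 1 <;> simp [SPred, h]
  have h2 : ∀ (i : Fin m) (y : Fin (m+2)),
      (if SPred m (i.succ.succ, y) then 1 else 0) = if y ≠ 0 then 1 else 0 := by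
    intro i y
    have : i.succ.succ ≠ (1 : Fin (m+2)) := by
      intro h; simpa using congrArg Fin.val h
    by_cases h : y = 0 <;> simp [SPred, h, this]
  rw [Fin.sum_univ_succ]
  simp only [h0]
  rw [Fin.sum_univ_succ (n := m)]
  simp only [h1, h2]
  have h3 : (∑ y : Fin (m+2), if y ≠ 0 then 1 else 0) = m + 1 := by
    rw [Fin.sum_univ_succ]; simp
  simp only [h3]
  simp
  have : (m+2)^2 = m*(m+1) + m + 2*(m+2) := by ring
  omega

lemma Jmat_eq (m : ℕ) : Jmat (m+2) = Matrix.single 0 1 1 := by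
  ext i j
  simp only [Jmat, Matrix.of_apply, Matrix.single_apply]
  congr 1
  simp only [Fin.ext_iff, eq_iff_iff]
  simp [eq_comm]

lemma comm_apply (m : ℕ) (G : Matrix (Fin (m+2)) (Fin (m+2)) ℝ) (i j : Fin (m+2)) :
    (G * Jmat (m+2) - Jmat (m+2) * G) i j
      = (if j = 1 then G i 0 else 0) - (if i = 0 then G 1 j else 0) := by
  rw [Jmat_eq]
  simp [Matrix.mul_apply, Matrix.single_apply, ite_and, eq_comm]

lemma Jmat_apply (m : ℕ) (i j : Fin (m+2)) :
    Jmat (m+2) i j = if i = 0 ∧ j = 1 then 1 else 0 := by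
  rw [Jmat_eq]; simp [Matrix.single_apply, eq_comm]

lemma iter3_const (c : ℝ) : iteratedDeriv 3 (fun t : ℝ => c * t) = 0 := by
  have h : deriv (fun t : ℝ => c * t) = fun _ => c := by
    funext t; simpa using ((hasDerivAt_id t).const_mul c).deriv
  funext t
  simp [iteratedDeriv_succ', h]

lemma LMap_sym (m : ℕ) (G : Matrix (Fin (m+2)) (Fin (m+2)) ℝ)
    (h : ∀ i j, ¬ SPred m (i, j) → G i j = 0) : IsJSymmetryPair (m+2) (LMap m G) := by
  refine ⟨?_, fun t => ?_⟩
  · change ContDiff ℝ _ (fun t : ℝ => (G 0 0 - G 1 1) / 2 * t)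
    fun_prop
  · have hd : deriv (LMap m G).1 t = (G 0 0 - G 1 1) / 2 := by
      change deriv (fun t : ℝ => (G 0 0 - G 1 1) / 2 * t) t = _
      simpa using ((hasDerivAt_id t).const_mul ((G 0 0 - G 1 1) / 2)).deriv
    have h3 : iteratedDeriv 3 (LMap m G).1 t = 0 := congrFun (iter3_const _) t
    rw [hd, h3]
    ext i j
    have := comm_apply m G i j
    change (G * Jmat (m+2) - Jmat (m+2) * G) i j - (2 * ((G 0 0 - G 1 1) / 2)) * Jmat (m+2) i j
      + (0 / 2) * (1 : Matrix _ _ ℝ) i j = 0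
    rw [this, Jmat_apply]
    have a : i ≠ 0 → G i 0 = 0 := fun hi => h _ _ (by simp [SPred, hi])
    have b : j ≠ 1 → G 1 j = 0 := fun hi => h _ _ (by simp [SPred, hi])
    by_cases hi : i = 0 <;> by_cases hj : j = 1 <;> simp_all
    ring

lemma sym_form (m : ℕ) (q : (ℝ → ℝ) × Matrix (Fin (m+2)) (Fin (m+2)) ℝ)
    (hq : IsJSymmetryPair (m+2) q) :
    (∀ i j, ¬ SPred m (i, j) → q.2 i j = 0) ∧ q = q.1 0 • PFam m none + LMap m q.2 := by
  obtain ⟨τ, G⟩ := q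
  obtain ⟨hs, he⟩ := hq
  simp only at hs he ⊢
  have hent : ∀ t i j, (if j = 1 then G i 0 else 0) - (if i = 0 then G 1 j else 0)
      - (2 * deriv τ t) * (if i = 0 ∧ j = 1 then 1 else 0)
      + (iteratedDeriv 3 τ t / 2) * (1 : Matrix (Fin (m+2)) (Fin (m+2)) ℝ) i j = 0 := by
    intro t i j
    have := congrFun (congrFun (he t) i) j
    rw [← comm_apply, ← Jmat_apply]
    exact this
  have h3 : ∀ t, iteratedDeriv 3 τ t = 0 := by
    intro t
    have a := hent t 0 0
    have b := hent t 1 1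
    simp at a b
    linarith
  have hd : ∀ t, deriv τ t = (G 0 0 - G 1 1) / 2 := by
    intro t
    have a := hent t 0 1
    simp at a
    linarith
  constructor
  · intro i j hS
    simp only [SPred, not_and_or, Classical.not_imp] at hS
    rcases hS with ⟨rfl, hi⟩ | ⟨rfl, hj⟩
    · have a := hent 0 i 1
      simpa [hi, h3] using a
    · have a := hent 0 0 j
      simpa [hj, h3] using a
  · have hτ : Differentiable ℝ τ := hs.differentiable (by simp)
    have key : ∀ t, τ t = τ 0 + (G 0 0 - G 1 1) / 2 * t := by
      intro t
      have hD : ∀ x, HasDerivAt (fun t => τ t - (G 0 0 - G 1 1) / 2 * t) 0 x := by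
        intro x
        have := (hτ x).hasDerivAt.sub ((hasDerivAt_id x).const_mul ((G 0 0 - G 1 1) / 2))
        rw [hd x] at this
        have h2 : HasDerivAt (τ - fun y => (G 0 0 - G 1 1) / 2 * y) 0 x := by
          simpa using this
        exact h2
      have := is_const_of_deriv_eq_zero (fun x => (hD x).differentiableAt)
        (fun x => (hD x).deriv) t 0
      simp at this
      linarith
    refine Prod.ext ?_ ?_
    · funext t
      simpa [PFam, LMap] using key t
    · simp [PFam, LMap]

lemma none_sym (m : ℕ) : IsJSymmetryPair (m+2) (PFam m none) := by
  refine ⟨contDiff_const, fun t => ?_⟩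
  simp [PFam, iteratedDeriv_succ']

lemma sum_single (m : ℕ) (g : {x // SPred m x} → ℝ) (x : {x // SPred m x}) :
    (∑ y, g y • Matrix.single y.1.1 y.1.2 (1:ℝ)) x.1.1 x.1.2 = g x := by
  rw [Matrix.sum_apply, Finset.sum_eq_single x]
  · simp
  · intro y _ hy
    have : ¬ (y.1.1 = x.1.1 ∧ y.1.2 = x.1.2) := fun h => hy (Subtype.ext (Prod.ext h.1 h.2))
    simp [Matrix.single_apply, this]
  · simp

lemma sum_single_not (m : ℕ) (g : {x // SPred m x} → ℝ) (i j : Fin (m+2))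
    (h : ¬ SPred m (i, j)) :
    (∑ y, g y • Matrix.single y.1.1 y.1.2 (1:ℝ)) i j = 0 := by
  rw [Matrix.sum_apply]
  refine Finset.sum_eq_zero fun y _ => ?_
  have : ¬ (y.1.1 = i ∧ y.1.2 = j) := by
    rintro ⟨rfl, rfl⟩; exact h y.2
  simp [Matrix.single_apply, this]

lemma li (m : ℕ) : LinearIndependent ℝ (PFam m) := by
  rw [Fintype.linearIndependent_iff]
  intro g hg
  rw [Fintype.sum_option] at hg
  have e : ∑ y, g (some y) • PFam m (some y)
      = LMap m (∑ y, g (some y) • Matrix.single y.1.1 y.1.2 (1:ℝ)) := by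
    rw [map_sum]; simp only [map_smul]; rfl
  rw [e] at hg
  have hsum := sum_single m (fun y => g (some y))
  generalize (∑ y, g (some y) • Matrix.single y.1.1 y.1.2 (1:ℝ)) = M at hg hsum
  rintro (_ | x)
  · have := congrFun (congrArg Prod.fst hg) 0
    simpa [PFam, LMap] using this
  · have := congrFun (congrFun (congrArg Prod.snd hg) x.1.1) x.1.2
    rw [← hsum x]
    simpa [PFam, LMap] using this

/-- The space of symmetry pairs of the constant matrix-valued function `V ≡ J` has
dimension exactly `n² − 2n + 4`: there are `n² − 2n + 4` linearly independent symmetry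
pairs spanning all symmetry pairs. -/
theorem symmetry_pairs_of_J_dimension (n : ℕ) (hn : 2 ≤ n) :
    ∃ p : Fin (n ^ 2 - 2 * n + 4) → (ℝ → ℝ) × Matrix (Fin n) (Fin n) ℝ,
      (∀ i, IsJSymmetryPair n (p i)) ∧ LinearIndependent ℝ p ∧
        ∀ q, IsJSymmetryPair n q → q ∈ Submodule.span ℝ (Set.range p) := by
  obtain ⟨m, rfl⟩ : ∃ m, n = m + 2 := ⟨n - 2, by omega⟩
  let e := (Fintype.equivFinOfCardEq (card_S m)).symm
  refine ⟨PFam m ∘ e, fun i => ?_, (li m).comp _ e.injective, fun q hq => ?_⟩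
  · rw [Function.comp_apply]
    rcases e i with _ | x
    · exact none_sym m
    · refine LMap_sym m _ fun i j hS => ?_
      have : ¬ (x.1.1 = i ∧ x.1.2 = j) := by
        rintro ⟨rfl, rfl⟩; exact hS x.2
      simp [Matrix.single_apply, this]
  · rw [e.surjective.range_comp]
    obtain ⟨h0, h1⟩ := sym_form m q hq
    have hG : q.2 = ∑ y : {x // SPred m x}, q.2 y.1.1 y.1.2 • Matrix.single y.1.1 y.1.2 (1:ℝ) := by
      ext i j
      by_cases hS : SPred m (i, j)
      · exact (sum_single m (fun y => q.2 y.1.1 y.1.2) ⟨(i, j), hS⟩).symm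
      · rw [h0 i j hS]
        exact (sum_single_not m (fun y => q.2 y.1.1 y.1.2) i j hS).symm
    rw [h1]
    refine Submodule.add_mem _ (Submodule.smul_mem _ _ (Submodule.subset_span ⟨none, rfl⟩)) ?_
    rw [hG, map_sum]
    refine Submodule.sum_mem _ fun y _ => ?_
    rw [map_smul]
    exact Submodule.smul_mem _ _ (Submodule.subset_span ⟨some y, rfl⟩)
end

section
/- Let n ≥ 1, let T : ℝ → ℝ be three times differentiable with T'(t) > 0 for all t, let C ∈ M_n(ℝ) be invertible, and let V : ℝ → M_n(ℝ). Suppose x : ℝ → ℝⁿ is twice differentiable and satisfies x''(t) = V(t)·x(t) for all t, and suppose y : ℝ → ℝⁿ is twice differentiable and satisfies y(T(t)) = √(T'(t)) · (C·x(t)) for all t. Then for all t ∈ ℝ: y''(T(t)) = Ṽ(t)·y(T(t)), where Ṽ(t) := T'(t)^{-2} · C·V(t)·C^{-1} + ((2·T'(t)·T'''(t) − 3·T''(t)²) / (4·T'(t)⁴)) · E. (This verifies that the transformations t̃ = T(t), x̃ = √(T') C x are equivalence transformations of the class of systems x_tt = V(t)x, mapping solutions of x_tt = V x to solutions of x̃_t̃t̃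 = Ṽ x̃.) -/
theorem scalar_aux (T T1 T2 T3 : ℝ → ℝ)
    (hT1 : ∀ t, HasDerivAt T (T1 t) t)
    (hT2 : ∀ t, HasDerivAt T1 (T2 t) t)
    (hT3 : ∀ t, HasDerivAt T2 (T3 t) t)
    (hpos : ∀ t, 0 < T1 t)
    (u u1 u2 y y1 y2 : ℝ → ℝ)
    (hu1 : ∀ t, HasDerivAt u (u1 t) t)
    (hu2 : ∀ t, HasDerivAt u1 (u2 t) t)
    (hy1 : ∀ t, HasDerivAt y (y1 t) t)
    (hy2 : ∀ t, HasDerivAt y1 (y2 t) t)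
    (hyT : ∀ t, y (T t) = Real.sqrt (T1 t) * u t) (t : ℝ) :
    y2 (T t) = (1 / (T1 t) ^ 2) * (Real.sqrt (T1 t) * u2 t)
      + ((2 * T1 t * T3 t - 3 * (T2 t) ^ 2) / (4 * (T1 t) ^ 4)) * (Real.sqrt (T1 t) * u t) := by
  obtain ⟨s, hs⟩ : ∃ s : ℝ → ℝ, s = fun t => Real.sqrt (T1 t) := ⟨_, rfl⟩
  have hs' : ∀ t, Real.sqrt (T1 t) = s t := fun t => by rw [hs]
  have hsp : ∀ t, 0 < s t := fun t => by rw [← hs']; exact Real.sqrt_pos.2 (hpos t)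
  have hsq : ∀ t, T1 t = s t ^ 2 := fun t => by rw [← hs', Real.sq_sqrt (hpos t).le]
  have hsd : ∀ t, HasDerivAt s (T2 t / (2 * s t)) t := fun t => by
    have h := (hT2 t).sqrt (hpos t).ne'
    rw [hs' t] at h
    rw [hs] at h ⊢
    exact h
  have e1 : ∀ t, y1 (T t) = T2 t * u t / (2 * s t ^ 3) + u1 t / s t := fun t => by
    have h1 := (hy1 (T t)).comp t (hT1 t)
    have h2 := (hsd t).mul (hu1 t)
    have hf : y ∘ T = s * u := by
      funext r
      simp [hyT, hs']
    rw [hf] at h1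
    have h := h1.unique h2
    have := (hsp t).ne'
    rw [hsq] at h
    field_simp at h ⊢
    linear_combination h
  have h1 := (hy2 (T t)).comp t (hT1 t)
  have hne := (hsp t).ne'
  have h2 := (((hT3 t).mul (hu1 t)).div (((hsd t).pow 3).const_mul 2) (by simp [hne])).add
    ((hu2 t).div (hsd t) hne)
  have h3 := h1.congr_of_eventuallyEq (Filter.Eventually.of_forall fun r => (e1 r).symm)
  have h := h3.unique h2
  simp only [Pi.mul_apply, Pi.pow_apply] at h
  rw [hs', hsq] at *
  have h' : y2 (T t) = _ / s t ^ 2 := (eq_div_iff (pow_ne_zero 2 hne)).2 h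
  rw [h']
  push_cast
  field_simp
  ring

/-- The transformations `t̃ = T(t)`, `x̃ = √(T'(t)) C x` are equivalence transformations of
the class of systems `x_tt = V(t)x`: they map solutions of `x'' = V x` to solutions of
`y'' = Ṽ y` with `Ṽ = T'⁻² C V C⁻¹ + ((2T'T''' − 3T''²)/(4T'⁴)) E`. -/
theorem equivalence_transformation_of_solutions (n : ℕ) (hn : 1 ≤ n)
    (T T1 T2 T3 : ℝ → ℝ)
    (hT1 : ∀ t, HasDerivAt T (T1 t) t)
    (hT2 : ∀ t, HasDerivAt T1 (T2 t) t)
    (hT3 : ∀ t, HasDerivAt T2 (T3 t) t)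
    (hpos : ∀ t, 0 < T1 t)
    (C : Matrix (Fin n) (Fin n) ℝ) (hC : IsUnit C.det)
    (V : ℝ → Matrix (Fin n) (Fin n) ℝ)
    (x x' x'' : ℝ → Fin n → ℝ)
    (hx1 : ∀ t, HasDerivAt x (x' t) t)
    (hx2 : ∀ t, HasDerivAt x' (x'' t) t)
    (hxeq : ∀ t, x'' t = (V t).mulVec (x t))
    (y y' y'' : ℝ → Fin n → ℝ)
    (hy1 : ∀ t, HasDerivAt y (y' t) t)
    (hy2 : ∀ t, HasDerivAt y' (y'' t) t)
    (hyT : ∀ t, y (T t) = Real.sqrt (T1 t) • C.mulVec (x t)) :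
    ∀ t : ℝ, y'' (T t) =
      ((1 / (T1 t) ^ 2) • (C * V t * C⁻¹)
        + ((2 * T1 t * T3 t - 3 * (T2 t) ^ 2) / (4 * (T1 t) ^ 4)) •
            (1 : Matrix (Fin n) (Fin n) ℝ)).mulVec (y (T t)) := by
  intro t
  have hd : ∀ (f f' : ℝ → Fin n → ℝ), (∀ t, HasDerivAt f (f' t) t) →
      ∀ i t, HasDerivAt (fun r => C.mulVec (f r) i) (C.mulVec (f' t) i) t := by
    intro f f' hf i t
    simp only [Matrix.mulVec, dotProduct]
    exact HasDerivAt.fun_sum fun j _ => ((hasDerivAt_pi.1 (hf t)) j).const_mul (C i j)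
  have hCC : C⁻¹ * C = 1 := Matrix.nonsing_inv_mul C hC
  funext i
  have h := scalar_aux T T1 T2 T3 hT1 hT2 hT3 hpos _ _ _ (fun t => y t i) (fun t => y' t i)
    (fun t => y'' t i) (hd x x' hx1 i) (hd x' x'' hx2 i) (fun t => hasDerivAt_pi.1 (hy1 t) i)
    (fun t => hasDerivAt_pi.1 (hy2 t) i) (fun t => by simp [hyT]) t
  have hm : (C * V t * C⁻¹).mulVec (C.mulVec (x t)) = C.mulVec (x'' t) := by
    rw [Matrix.mulVec_mulVec, Matrix.mul_assoc, hCC, Matrix.mul_one, hxeq, Matrix.mulVec_mulVec]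
  rw [hyT, Matrix.add_mulVec, Matrix.smul_mulVec, Matrix.smul_mulVec, Matrix.mulVec_smul, hm,
    Matrix.one_mulVec]
  simpa using h
end

section
/- Let n ≥ 1, let A : ℝ → M_n(ℝ) be differentiable with derivative A', let B : ℝ → M_n(ℝ) and f : ℝ → ℝⁿ, and let H : ℝ → M_n(ℝ) be differentiable with H(t) invertible for every t and H'(t) = −(1/2)·H(t)·A(t) for all t. Suppose x, h : ℝ → ℝⁿ are twice differentiable solutions of the system z''(t) = A(t)z'(t) + B(t)z(t) + f(t). Then y(t) := H(t)·(x(t) − h(t)) is twice differentiable and satisfies y''(t) = H(t)·(B(t) − (1/2)A'(t) + (1/4)A(t)²)·H(t)^{-1}·y(t) for all t ∈ ℝ. (This is the paper's reduction, by an equivalence transformation with h a particular solution and H solving H_t + (1/2)HA = 0, of any normal linear system x_tt = A x_t + B x + f to a homogeneous system x̃_tt = Ṽ(t) x̃ with Ṽ = H(B − (1/2)A_t + (1/4)A²)H^{-1}.) -/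
theorem aux_mulVec_deriv {n : ℕ} {M : ℝ → Matrix (Fin n) (Fin n) ℝ}
    {M' : Matrix (Fin n) (Fin n) ℝ} {u : ℝ → Fin n → ℝ} {u' : Fin n → ℝ} {t : ℝ}
    (hM : ∀ i j, HasDerivAt (fun s => M s i j) (M' i j) t) (hu : HasDerivAt u u' t) :
    HasDerivAt (fun s => (M s).mulVec (u s)) (M'.mulVec (u t) + (M t).mulVec u') t := by
  rw [hasDerivAt_pi] at hu ⊢
  intro i
  have := HasDerivAt.fun_sum (u := Finset.univ) (fun j _ => (hM i j).mul (hu j))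
  simpa [Matrix.mulVec, dotProduct, Finset.sum_add_distrib] using this

/-- Reduction of any normal linear system `x'' = A x' + B x + f` to a homogeneous system
`y'' = H (B − (1/2)A' + (1/4)A²) H⁻¹ y`, where `h` is a particular solution and `H` solves
`H' + (1/2) H A = 0`, via the equivalence transformation `y = H (x − h)`. -/
theorem reduction_to_homogeneous_system (n : ℕ) (hn : 1 ≤ n)
    (A A' B : ℝ → Matrix (Fin n) (Fin n) ℝ) (f : ℝ → Fin n → ℝ)
    (hA : ∀ (t : ℝ) (i j : Fin n), HasDerivAt (fun s => A s i j) (A' t i j) t)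
    (H : ℝ → Matrix (Fin n) (Fin n) ℝ)
    (hHinv : ∀ t, IsUnit (H t).det)
    (hH : ∀ (t : ℝ) (i j : Fin n),
      HasDerivAt (fun s => H s i j) ((-(1 / 2 : ℝ) • (H t * A t)) i j) t)
    (x x' x'' h h' h'' : ℝ → Fin n → ℝ)
    (hx1 : ∀ t, HasDerivAt x (x' t) t) (hx2 : ∀ t, HasDerivAt x' (x'' t) t)
    (hxeq : ∀ t, x'' t = (A t).mulVec (x' t) + (B t).mulVec (x t) + f t)
    (hh1 : ∀ t, HasDerivAt h (h' t) t) (hh2 : ∀ t, HasDerivAt h' (h'' t) t)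
    (hheq : ∀ t, h'' t = (A t).mulVec (h' t) + (B t).mulVec (h t) + f t) :
    ∃ y' y'' : ℝ → Fin n → ℝ,
      (∀ t, HasDerivAt (fun s => (H s).mulVec (x s - h s)) (y' t) t) ∧
      (∀ t, HasDerivAt y' (y'' t) t) ∧
      ∀ t, y'' t =
        (H t * (B t - (1 / 2 : ℝ) • A' t + (1 / 4 : ℝ) • (A t * A t)) * (H t)⁻¹).mulVec
          ((H t).mulVec (x t - h t)) := by
  have hu1 : ∀ t, HasDerivAt (fun s => x s - h s) (x' t - h' t) t :=
    fun t => (hx1 t).sub (hh1 t)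
  have hu2 : ∀ t, HasDerivAt (fun s => x' s - h' s) (x'' t - h'' t) t :=
    fun t => (hx2 t).sub (hh2 t)
  have hw : ∀ t, HasDerivAt
      (fun s => (x' s - h' s) - (1 / 2 : ℝ) • (A s).mulVec (x s - h s))
      ((x'' t - h'' t) - (1 / 2 : ℝ) •
        ((A' t).mulVec (x t - h t) + (A t).mulVec (x' t - h' t))) t :=
    fun t => (hu2 t).sub ((aux_mulVec_deriv (hA t) (hu1 t)).const_smul (1 / 2 : ℝ))
  refine ⟨fun s => (H s).mulVec ((x' s - h' s) - (1 / 2 : ℝ) • (A s).mulVec (x s - h s)),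
    _, fun t => ?_, fun t => aux_mulVec_deriv (hH t) (hw t), fun t => ?_⟩
  · convert aux_mulVec_deriv (hH t) (hu1 t) using 1
    simp only [Matrix.mulVec_sub, Matrix.mulVec_smul, Matrix.smul_mulVec,
      ← Matrix.mulVec_mulVec]
    module
  · have e : ∀ K : Matrix (Fin n) (Fin n) ℝ, (H t * K * (H t)⁻¹).mulVec
        ((H t).mulVec (x t - h t)) = (H t).mulVec (K.mulVec (x t - h t)) := by
      intro K
      rw [Matrix.mulVec_mulVec, Matrix.mul_assoc, Matrix.nonsing_inv_mul _ (hHinv t),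
        Matrix.mul_one, Matrix.mulVec_mulVec]
    rw [e, hxeq, hheq]
    simp only [Matrix.mulVec_sub, Matrix.mulVec_add, Matrix.sub_mulVec, Matrix.add_mulVec,
      Matrix.mulVec_smul, Matrix.smul_mulVec, ← Matrix.mulVec_mulVec]
    module
end

section
/- Let n ≥ 1, let Υ, V₀ ∈ M_n(ℝ), set K₀ := V₀ and K_{l+1} := [Υ, K_l] for l ∈ ℕ, and let Γ ∈ M_n(ℝ) satisfy [Γ, K_l] = 0 for all l ∈ ℕ. Let α ∈ ℝ, α ≠ 0, and let M ∈ M_n(ℝ) be invertible. Define Υ̃ := α·M(Υ + Γ)M^{-1} and Ṽ₀ := α²·M·V₀·M^{-1}. Then for all t ∈ ℝ: exp(tΥ̃)·Ṽ₀·exp(−tΥ̃) = α²·M·(exp(αtΥ)·V₀·exp(−αtΥ))·M^{-1}. Consequently, if x : ℝ → ℝⁿ is twice differentiable with x''(t) = exp(tΥ)·V₀·exp(−tΥ)·x(t) for all t, then y(t) := M·x(αt) satisfies y''(t) = exp(tΥ̃)·Ṽ₀·exp(−tΥ̃)·y(t) for all t. (This is the 'if' direction of the paper's similarity criterion for properly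 t-shift-invariant systems x_tt = e^{tΥ}V(0)e^{−tΥ}x.) -/
open NormedSpace

theorem aux_exp_apply {𝔸 : Type*} [NormedRing 𝔸] [NormedAlgebra ℝ 𝔸] [CompleteSpace 𝔸]
    (T : 𝔸 →L[ℝ] 𝔸) (x : 𝔸) :
    HasSum (fun k : ℕ => ((k.factorial : ℝ)⁻¹) • (T ^ k) x) (exp T x) := by
  have h := NormedSpace.exp_series_hasSum_exp' (𝕂 := ℝ) T
  have h2 := h.mapL (ContinuousLinearMap.apply ℝ 𝔸 x)
  simpa using h2

theorem aux_exp_left {𝔸 : Type*} [NormedRing 𝔸] [NormedAlgebra ℝ 𝔸] [CompleteSpace 𝔸]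
    (A x : 𝔸) : exp (ContinuousLinearMap.mul ℝ 𝔸 A) x = exp A * x := by
  refine (aux_exp_apply _ x).unique ?_
  have h := (NormedSpace.exp_series_hasSum_exp' (𝕂 := ℝ) A).mul_right x
  refine (congrArg (fun f => HasSum f _) (funext fun k => ?_)).mpr h
  rw [smul_mul_assoc]
  congr 1
  induction k with
  | zero => simp
  | succ k ih => rw [pow_succ', pow_succ', mul_apply_eq_comp, ih]; simp [mul_assoc]

theorem aux_exp_right {𝔸 : Type*} [NormedRing 𝔸] [NormedAlgebra ℝ 𝔸] [CompleteSpace 𝔸]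
    (A x : 𝔸) : exp ((ContinuousLinearMap.mul ℝ 𝔸).flip A) x = x * exp A := by
  refine (aux_exp_apply _ x).unique ?_
  have h := (NormedSpace.exp_series_hasSum_exp' (𝕂 := ℝ) A).mul_left x
  refine (congrArg (fun f => HasSum f _) (funext fun k => ?_)).mpr h
  rw [mul_smul_comm]
  congr 1
  induction k with
  | zero => simp
  | succ k ih => rw [pow_succ', pow_succ, mul_apply_eq_comp, ih]; simp [mul_assoc]

theorem aux_conj {𝔸 : Type*} [NormedRing 𝔸] [NormedAlgebra ℝ 𝔸] [CompleteSpace 𝔸]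
    (A : 𝔸) (K : ℕ → 𝔸) (hK : ∀ l, K (l + 1) = A * K l - K l * A) :
    HasSum (fun k : ℕ => ((k.factorial : ℝ)⁻¹) • K k) (exp A * K 0 * exp (-A)) := by
  letI : NormedAlgebra ℚ (𝔸 →L[ℝ] 𝔸) := NormedAlgebra.restrictScalars ℚ ℝ _
  have hc : Commute (ContinuousLinearMap.mul ℝ 𝔸 A) ((ContinuousLinearMap.mul ℝ 𝔸).flip (-A)) := by
    ext x
    simp [mul_assoc]
  have h := aux_exp_apply
    (ContinuousLinearMap.mul ℝ 𝔸 A + (ContinuousLinearMap.mul ℝ 𝔸).flip (-A)) (K 0)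
  rw [NormedSpace.exp_add_of_commute hc, mul_apply_eq_comp, aux_exp_right,
    aux_exp_left, ← mul_assoc] at h
  convert h using 2 with k
  congr 1
  induction k with
  | zero => simp
  | succ k ih => rw [pow_succ', mul_apply_eq_comp, ← ih, hK]; simp [sub_eq_add_neg]

theorem aux_matrix (n : ℕ) (A B : Matrix (Fin n) (Fin n) ℝ) (K : ℕ → Matrix (Fin n) (Fin n) ℝ)
    (hA : ∀ l, K (l + 1) = A * K l - K l * A) (hB : ∀ l, K (l + 1) = B * K l - K l * B) :
    exp A * K 0 * exp (-A) = exp B * K 0 * exp (-B) := by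
  letI : NormedRing (Matrix (Fin n) (Fin n) ℝ) := Matrix.linftyOpNormedRing
  letI : NormedAlgebra ℝ (Matrix (Fin n) (Fin n) ℝ) := Matrix.linftyOpNormedAlgebra
  exact (aux_conj A K hA).unique (aux_conj B K hB)

/-- The 'if' direction of the similarity criterion for properly `t`-shift-invariant systems
`x_tt = e^{tΥ} V₀ e^{−tΥ} x`: if `Γ` centralizes all the matrices `K_l` (where `K₀ = V₀`,
`K_{l+1} = [Υ, K_l]`), `α ≠ 0` and `M` is invertible, then with `Υ̃ = αM(Υ + Γ)M⁻¹` and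
`Ṽ₀ = α²MV₀M⁻¹` one has `e^{tΥ̃} Ṽ₀ e^{−tΥ̃} = α² M e^{αtΥ} V₀ e^{−αtΥ} M⁻¹`, and the
transformation `y(t) = M x(αt)` maps solutions of the first system to solutions of the
second one. -/
theorem similarity_criterion_if_direction (n : ℕ) (hn : 1 ≤ n)
    (Υ V₀ Γ : Matrix (Fin n) (Fin n) ℝ)
    (K : ℕ → Matrix (Fin n) (Fin n) ℝ)
    (hK0 : K 0 = V₀) (hKrec : ∀ l, K (l + 1) = Υ * K l - K l * Υ)
    (hΓ : ∀ l, Γ * K l - K l * Γ = 0)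
    (α : ℝ) (hα : α ≠ 0)
    (M : Matrix (Fin n) (Fin n) ℝ) (hM : IsUnit M.det) :
    (∀ t : ℝ,
      exp (t • (α • (M * (Υ + Γ) * M⁻¹))) * (α ^ 2 • (M * V₀ * M⁻¹)) *
          exp (-(t • (α • (M * (Υ + Γ) * M⁻¹)))) =
        α ^ 2 • (M * (exp ((α * t) • Υ) * V₀ * exp (-((α * t) • Υ))) * M⁻¹)) ∧
    ∀ x x' x'' : ℝ → Fin n → ℝ,
      (∀ t, HasDerivAt x (x' t) t) → (∀ t, HasDerivAt x' (x'' t) t) →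
      (∀ t, x'' t = (exp (t • Υ) * V₀ * exp (-(t • Υ))).mulVec (x t)) →
      ∃ y' y'' : ℝ → Fin n → ℝ,
        (∀ t, HasDerivAt (fun s => M.mulVec (x (α * s))) (y' t) t) ∧
        (∀ t, HasDerivAt y' (y'' t) t) ∧
        ∀ t, y'' t =
          (exp (t • (α • (M * (Υ + Γ) * M⁻¹))) * (α ^ 2 • (M * V₀ * M⁻¹)) *
            exp (-(t • (α • (M * (Υ + Γ) * M⁻¹))))).mulVec (M.mulVec (x (α * t))) := by
  have hMu : IsUnit M := (Matrix.isUnit_iff_isUnit_det M).2 hM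
  have hMM : M⁻¹ * M = 1 := Matrix.nonsing_inv_mul M hM
  have key : ∀ t : ℝ,
      exp (t • (α • (M * (Υ + Γ) * M⁻¹))) * (α ^ 2 • (M * V₀ * M⁻¹)) *
          exp (-(t • (α • (M * (Υ + Γ) * M⁻¹)))) =
        α ^ 2 • (M * (exp ((α * t) • Υ) * V₀ * exp (-((α * t) • Υ))) * M⁻¹) := by
    intro t
    have e1 : t • (α • (M * (Υ + Γ) * M⁻¹)) = M * ((α * t) • (Υ + Γ)) * M⁻¹ := by
      rw [smul_smul, mul_comm t α, mul_smul_comm, smul_mul_assoc]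
    have e2 : -(M * ((α * t) • (Υ + Γ)) * M⁻¹) = M * (-((α * t) • (Υ + Γ))) * M⁻¹ := by
      rw [mul_neg, neg_mul]
    rw [e1, e2, Matrix.exp_conj _ _ hMu, Matrix.exp_conj _ _ hMu]
    have h := aux_matrix n ((α * t) • Υ) ((α * t) • (Υ + Γ)) (fun l => (α * t) ^ l • K l)
      (fun l => by
        simp only [hKrec, pow_succ, smul_mul_assoc, mul_smul_comm, smul_smul, smul_sub,
          mul_comm])
      (fun l => by
        have : K (l + 1) = (Υ + Γ) * K l - K l * (Υ + Γ) := by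
          rw [hKrec, add_mul, mul_add, add_sub_add_comm, hΓ, add_zero]
        simp only [this, pow_succ, smul_mul_assoc, mul_smul_comm, smul_smul, smul_sub,
          mul_comm])
    simp only [pow_zero, one_smul, hK0] at h
    rw [h]
    simp only [mul_smul_comm, smul_mul_assoc]
    congr 1
    generalize exp ((α * t) • (Υ + Γ)) = E
    generalize exp (-((α * t) • (Υ + Γ))) = F
    calc M * E * M⁻¹ * (M * V₀ * M⁻¹) * (M * F * M⁻¹)
        = M * E * (M⁻¹ * M) * V₀ * (M⁻¹ * M) * F * M⁻¹ := by simp only [mul_assoc]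
      _ = _ := by rw [hMM]; simp only [mul_assoc, one_mul]
  refine ⟨key, ?_⟩
  intro x x' x'' hx hx' hx''
  have lin : ∀ (f f' : ℝ → Fin n → ℝ), (∀ t, HasDerivAt f (f' t) t) → ∀ t,
      HasDerivAt (fun s => M.mulVec (f (α * s))) (α • M.mulVec (f' (α * t))) t := by
    intro f f' hf t
    have h1 : HasDerivAt (fun s => f (α * s)) (α • f' (α * t)) t := by
      have h0 : HasDerivAt (fun s : ℝ => α * s) α t := by
        simpa using (hasDerivAt_id t).const_mul α
      exact (hf (α * t)).scomp t h0
    have h2 := ((LinearMap.toContinuousLinearMap M.mulVecLin).hasFDerivAt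
      (x := f (α * t))).comp_hasDerivAt t h1
    simpa [Function.comp_def, Matrix.mulVec_smul] using h2
  refine ⟨fun t => α • M.mulVec (x' (α * t)), fun t => α • α • M.mulVec (x'' (α * t)),
    lin x x' hx, fun t => (lin x' x'' hx' t).const_smul α, ?_⟩
  intro t
  rw [key]
  beta_reduce
  rw [hx'']
  simp only [smul_mul_assoc, Matrix.smul_mulVec, Matrix.mulVec_mulVec, smul_smul, mul_assoc, hMM, mul_one, sq]
end

section
/- Let F be a field of characteristic zero, n ≥ 1, and let Λ, Υ, W ∈ M_n(F). Set K₀ := W and K_{l+1} := [Υ, K_l] for l ∈ ℕ, and suppose [Λ, K_l] = (l+2)·K_l for every l ∈ ℕ. Then every matrix K_l (l ∈ ℕ) is nilpotent. -/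
theorem nilp_aux {F : Type*} [Field F] [CharZero F] {n : ℕ}
    (L A : Matrix (Fin n) (Fin n) F) (c : F) (hc : c ≠ 0)
    (h : L * A - A * L = c • A) : IsNilpotent A := by
  have hp : ∀ k : ℕ, L * A ^ k - A ^ k * L = ((k : F) * c) • A ^ k := by
    intro k
    induction k with
    | zero => simp
    | succ k ih =>
      have : L * A ^ (k+1) - A ^ (k+1) * L
          = (L * A ^ k - A ^ k * L) * A + A ^ k * (L * A - A * L) := by
        rw [pow_succ]; noncomm_ring
      rw [this, ih, h, smul_mul_assoc, mul_smul_comm, ← pow_succ, ← add_smul]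
      push_cast
      congr 1
      ring
  by_contra hn
  have hne : ∀ k : ℕ, A ^ k ≠ 0 := fun k hk => hn ⟨k, hk⟩
  let f : Module.End F (Matrix (Fin n) (Fin n) F) :=
    LinearMap.mulLeft F L - LinearMap.mulRight F L
  have hli := Module.End.eigenvectors_linearIndependent' f (fun k : ℕ => (k : F) * c)
    (fun a b hab => by simpa [hc] using hab) (fun k => A ^ k)
    (fun k => ⟨Module.End.mem_eigenspace_iff.mpr (by simpa [f] using hp k), hne k⟩)
  exact not_finite_iff_infinite.mpr (inferInstance : Infinite ℕ) hli.finite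

/-- If `[Λ, K_l] = (l+2)·K_l` for the sequence `K₀ = W`, `K_{l+1} = [Υ, K_l]`, then every
matrix `K_l` is nilpotent. -/
theorem nilpotent_of_graded_commutation (F : Type*) [Field F] [CharZero F]
    (n : ℕ) (hn : 1 ≤ n)
    (Λ Υ W : Matrix (Fin n) (Fin n) F)
    (K : ℕ → Matrix (Fin n) (Fin n) F)
    (hK0 : K 0 = W) (hKrec : ∀ l, K (l + 1) = Υ * K l - K l * Υ)
    (hΛ : ∀ l : ℕ, Λ * K l - K l * Λ = ((l : F) + 2) • K l) :
    ∀ l : ℕ, IsNilpotent (K l) := by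
  intro l
  refine nilp_aux Λ (K l) _ ?_ (hΛ l)
  exact_mod_cast (by omega : l + 2 ≠ 0)
end

section
/- Let F be a field, n ≥ 1, and let Λ, S, N, K ∈ M_n(F) and c ∈ F. Suppose Λ = S + N, where S·N = N·S, N is nilpotent, and S is diagonalizable over F (i.e. S = P·D·P^{-1} for some invertible P and diagonal D). If [Λ, K] = c·K, then [N, K] = 0 and [S, K] = c·K. (In the paper: any eigenvector K_l of ad_Λ commutes with the nilpotent part Λ_n of the Jordan–Chevalley decomposition of Λ, so Λ may be replaced by its semisimple part Λ_s.) -/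
theorem ad_aux_diag {F : Type*} [Field F] {n : ℕ} (d : Fin n → F)
    (N K : Matrix (Fin n) (Fin n) F) (c : F)
    (hcomm : Matrix.diagonal d * N = N * Matrix.diagonal d) (hN : IsNilpotent N)
    (hK : (Matrix.diagonal d + N) * K - K * (Matrix.diagonal d + N) = c • K) :
    N * K - K * N = 0 := by
  have key : ∀ U : Module.End F (Matrix (Fin n) (Fin n) F),
      U = LinearMap.mulLeft F N - LinearMap.mulRight F N → N * K - K * N = 0 := by
    intro U hU
    have hUn : IsNilpotent U := by
      rw [hU]
      apply Commute.isNilpotent_sub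
      · exact LinearMap.commute_mulLeft_right N N
      · exact (LinearMap.isNilpotent_mulLeft_iff F N).2 hN
      · exact (LinearMap.isNilpotent_mulRight_iff F N).2 hN
    obtain ⟨m, hm⟩ := hUn
    have hUa : ∀ X, U X = N * X - X * N := by intro X; simp [hU]
    have hdX : ∀ X : Matrix (Fin n) (Fin n) F,
        Matrix.diagonal d * X - X * Matrix.diagonal d - c • X
          = Matrix.of fun i j => (d i - d j - c) * X i j := by
      intro X
      ext i j
      simp
      ring
    -- the iterates stay compatible
    have hrel : ∀ k, Matrix.diagonal d * (U ^ k) K - (U ^ k) K * Matrix.diagonal d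
        - c • (U ^ k) K = - (U ^ (k+1)) K := by
      intro k
      induction k with
      | zero =>
        simp only [pow_zero, Module.End.one_apply, zero_add, pow_one, hUa]
        rw [← hK]; noncomm_ring
      | succ k ih =>
        have e : (U ^ (k+1+1)) K = U ((U ^ (k+1)) K) := by
          rw [pow_succ' U (k+1), Module.End.mul_apply]
        have e' : (U ^ (k+1)) K = U ((U ^ k) K) := by
          rw [pow_succ' U k, Module.End.mul_apply]
        rw [e, ← map_neg, ← ih, e']
        generalize (U ^ k) K = Y
        simp only [hUa]
        have h1 : Matrix.diagonal d * (N * Y) = N * (Matrix.diagonal d * Y) := by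
          rw [← mul_assoc, hcomm, mul_assoc]
        have h2 : Y * N * Matrix.diagonal d = Y * Matrix.diagonal d * N := by
          rw [mul_assoc, ← hcomm, mul_assoc]
        simp only [mul_sub, sub_mul, smul_sub, h1, h2, mul_smul_comm, smul_mul_assoc]
        simp only [mul_assoc]
        abel
    have hent : ∀ k i j, (U ^ k) K i j = (-(d i - d j - c)) ^ k * K i j := by
      intro k i j
      induction k with
      | zero => simp
      | succ k ih =>
        have h := hrel k
        rw [hdX] at h
        have h' := congrFun (congrFun h i) j
        simp only [Matrix.of_apply, Matrix.neg_apply] at h'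
        rw [ih] at h'
        rw [pow_succ (-(d i - d j - c))]
        linear_combination h'
    ext i j
    rw [← hUa, ← pow_one U, hent 1 i j]
    have h := hent m i j
    rw [hm] at h
    simp only [LinearMap.zero_apply, Matrix.zero_apply] at h
    rcases mul_eq_zero.1 h.symm with h | h
    · have h0 : -(d i - d j - c) = 0 := by
        by_contra hne; exact pow_ne_zero m hne h
      rw [h0]; simp
    · simp [h]
  exact key _ rfl

/-- Any eigenvector `K` of `ad_Λ` commutes with the nilpotent part `N` of the
Jordan–Chevalley decomposition `Λ = S + N` (with `S` diagonalizable, `N` nilpotent,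
`SN = NS`), and is an eigenvector of `ad_S` with the same eigenvalue. -/
theorem ad_eigenvector_commutes_with_nilpotent_part (F : Type*) [Field F]
    (n : ℕ) (hn : 1 ≤ n)
    (Λ S N K : Matrix (Fin n) (Fin n) F) (c : F)
    (hΛ : Λ = S + N) (hcomm : S * N = N * S) (hN : IsNilpotent N)
    (hS : ∃ P D : Matrix (Fin n) (Fin n) F, IsUnit P.det ∧ D.IsDiag ∧ S = P * D * P⁻¹)
    (hK : Λ * K - K * Λ = c • K) :
    N * K - K * N = 0 ∧ S * K - K * S = c • K := by
  obtain ⟨P, D, hP, hD, rfl⟩ := hS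
  have h1 : P * P⁻¹ = 1 := Matrix.mul_nonsing_inv P hP
  have h2 : P⁻¹ * P = 1 := Matrix.nonsing_inv_mul P hP
  subst hΛ
  rw [← hD.diagonal_diag] at *
  generalize D.diag = d at *
  generalize P⁻¹ = Q at *
  have conj : ∀ X, P * (Q * X * P) * Q = X := by
    intro X
    calc _ = (P * Q) * X * (P * Q) := by noncomm_ring
      _ = X := by rw [h1]; simp
  have cm : ∀ X Y : Matrix (Fin n) (Fin n) F, (Q * X * P) * (Q * Y * P) = Q * (X * Y) * P := by
    intro X Y
    calc _ = Q * X * (P * Q) * Y * P := by noncomm_ring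
      _ = _ := by rw [h1]; noncomm_ring
  have hd : Q * (P * Matrix.diagonal d * Q) * P = Matrix.diagonal d := by
    calc _ = (Q * P) * Matrix.diagonal d * (Q * P) := by noncomm_ring
      _ = _ := by rw [h2]; simp
  have main : N * K - K * N = 0 := by
    have := ad_aux_diag d (Q * N * P) (Q * K * P) c ?_ ?_ ?_
    · rw [cm, cm, ← sub_mul, ← mul_sub] at this
      rw [← conj (N * K - K * N), this]; simp
    · rw [← hd, cm, cm, hcomm]
    · obtain ⟨m, hm⟩ := hN
      have hp : ∀ k, (Q * N * P) ^ k = Q * N ^ k * P := by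
        intro k
        induction k with
        | zero => simp [h2]
        | succ k ih => rw [pow_succ, ih, cm, pow_succ]
      exact ⟨m, by rw [hp, hm]; simp⟩
    · rw [← hd, ← add_mul, ← mul_add, cm, cm, ← sub_mul, ← mul_sub, hK]
      simp
  refine ⟨main, ?_⟩
  rw [← hK, ← sub_eq_zero, ← neg_eq_zero, ← main]
  noncomm_ring
end

section
/- Let n ≥ 1 and let Λ, Υ, W ∈ M_n(ℂ) with Λ diagonalizable over ℂ. Set K₀ := W and K_{l+1} := [Υ, K_l] for l ∈ ℕ, and suppose [Λ, K_l] = (l+2)·K_l for every l ∈ ℕ. Then there exist matrices Υ̂, Υ̌ ∈ M_n(ℂ) such that Υ = Υ̂ + Υ̌, [Λ, Υ̂] = Υ̂, and [Υ̌, K_l] = 0 for all l ∈ ℕ. (In the paper: the matrix Υ may be replaced by its 'hat-part' with respect to Λ, so that the stronger commutation relation [Λ, Υ] = Υ holds.) -/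
theorem diag_case_aux (n : ℕ) (d : Fin n → ℂ) (Y : Matrix (Fin n) (Fin n) ℂ)
    (K : ℕ → Matrix (Fin n) (Fin n) ℂ)
    (hKrec : ∀ l, K (l + 1) = Y * K l - K l * Y)
    (hcomm : ∀ l : ℕ, Matrix.diagonal d * K l - K l * Matrix.diagonal d = ((l : ℂ) + 2) • K l) :
    ∃ A B : Matrix (Fin n) (Fin n) ℂ,
      Y = A + B ∧ (Matrix.diagonal d * A - A * Matrix.diagonal d = A) ∧
        ∀ l : ℕ, B * K l - K l * B = 0 := by
  classical
  have hw : ∀ (l : ℕ) (i j : Fin n), d i - d j ≠ (l : ℂ) + 2 → K l i j = 0 := by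
    intro l i j h
    have h1 := congrFun (congrFun (hcomm l) i) j
    simp only [Matrix.sub_apply, Matrix.diagonal_mul, Matrix.mul_diagonal, Matrix.smul_apply,
      smul_eq_mul] at h1
    have h2 : (d i - d j - ((l : ℂ) + 2)) * K l i j = 0 := by linear_combination h1
    exact (mul_eq_zero.mp h2).resolve_left (sub_ne_zero.mpr h)
  let A : Matrix (Fin n) (Fin n) ℂ := fun i j => if d i - d j = 1 then Y i j else 0
  have hA0 : ∀ i j, d i - d j ≠ 1 → A i j = 0 := fun i j h => if_neg h
  have hB0 : ∀ i j, d i - d j = 1 → (Y - A) i j = 0 := by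
    intro i j h
    rw [Matrix.sub_apply, show A i j = Y i j from if_pos h, sub_self]
  refine ⟨A, Y - A, by abel, ?_, ?_⟩
  · ext i j
    simp only [Matrix.sub_apply, Matrix.diagonal_mul, Matrix.mul_diagonal]
    by_cases h : d i - d j = 1
    · linear_combination A i j * h
    · rw [hA0 i j h]; ring
  · intro l
    ext i j
    by_cases h : d i - d j = (l : ℂ) + 3
    · rw [Matrix.sub_apply, Matrix.mul_apply, Matrix.mul_apply, Finset.sum_eq_zero,
        Finset.sum_eq_zero]
      · simp
      · intro k _
        by_cases h2 : d i - d k = (l : ℂ) + 2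
        · rw [hB0 k j (by linear_combination h - h2), mul_zero]
        · rw [hw l i k h2, zero_mul]
      · intro k _
        by_cases h2 : d k - d j = (l : ℂ) + 2
        · rw [hB0 i k (by linear_combination h - h2), zero_mul]
        · rw [hw l k j h2, mul_zero]
    · have e : (Y - A) * K l - K l * (Y - A) = K (l + 1) - (A * K l - K l * A) := by
        rw [hKrec]; noncomm_ring
      rw [e, Matrix.sub_apply, Matrix.sub_apply, Matrix.mul_apply, Matrix.mul_apply,
        Finset.sum_eq_zero, Finset.sum_eq_zero, hw (l + 1) i j]
      · simp
      · intro h2; apply h; rw [h2]; push_cast; ring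
      · intro k _
        by_cases h2 : d i - d k = (l : ℂ) + 2
        · rw [hA0 k j (fun h3 => h (by linear_combination h2 + h3)), mul_zero]
        · rw [hw l i k h2, zero_mul]
      · intro k _
        by_cases h2 : d k - d j = (l : ℂ) + 2
        · rw [hA0 i k (fun h3 => h (by linear_combination h2 + h3)), zero_mul]
        · rw [hw l k j h2, mul_zero]

/-- If `Λ` is diagonalizable over `ℂ` and `[Λ, K_l] = (l+2)·K_l` for the sequence
`K₀ = W`, `K_{l+1} = [Υ, K_l]`, then `Υ` decomposes as `Υ = Υ̂ + Υ̌`, where the 'hat-part'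
satisfies `[Λ, Υ̂] = Υ̂` and the 'check-part' `Υ̌` centralizes all the matrices `K_l`. -/
theorem hat_check_decomposition (n : ℕ) (hn : 1 ≤ n)
    (Λ Υ W : Matrix (Fin n) (Fin n) ℂ)
    (hΛdiag : ∃ P D : Matrix (Fin n) (Fin n) ℂ, IsUnit P.det ∧ D.IsDiag ∧ Λ = P * D * P⁻¹)
    (K : ℕ → Matrix (Fin n) (Fin n) ℂ)
    (hK0 : K 0 = W) (hKrec : ∀ l, K (l + 1) = Υ * K l - K l * Υ)
    (hcomm : ∀ l : ℕ, Λ * K l - K l * Λ = ((l : ℂ) + 2) • K l) :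
    ∃ Υhat Υcheck : Matrix (Fin n) (Fin n) ℂ,
      Υ = Υhat + Υcheck ∧ (Λ * Υhat - Υhat * Λ = Υhat) ∧
        ∀ l : ℕ, Υcheck * K l - K l * Υcheck = 0 := by
  obtain ⟨P, D, hP, hD, hΛ⟩ := hΛdiag
  have hPQ : P * P⁻¹ = 1 := Matrix.mul_nonsing_inv P hP
  have hQP : P⁻¹ * P = 1 := Matrix.nonsing_inv_mul P hP
  generalize P⁻¹ = Q at *
  have hDd : Matrix.diagonal D.diag = D := hD.diagonal_diag
  have c1 : ∀ X Y : Matrix (Fin n) (Fin n) ℂ, (Q * X * P) * (Q * Y * P) = Q * (X * Y) * P := by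
    intro X Y
    calc _ = Q * X * (P * Q) * Y * P := by noncomm_ring
      _ = _ := by rw [hPQ]; noncomm_ring
  have c2 : ∀ X Y : Matrix (Fin n) (Fin n) ℂ, (P * X * Q) * (P * Y * Q) = P * (X * Y) * Q := by
    intro X Y
    calc _ = P * X * (Q * P) * Y * Q := by noncomm_ring
      _ = _ := by rw [hQP]; noncomm_ring
  have i1 : ∀ X : Matrix (Fin n) (Fin n) ℂ, P * (Q * X * P) * Q = X := by
    intro X
    calc _ = (P * Q) * X * (P * Q) := by noncomm_ring
      _ = _ := by rw [hPQ]; simp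
  have i2 : ∀ X : Matrix (Fin n) (Fin n) ℂ, Q * (P * X * Q) * P = X := by
    intro X
    calc _ = (Q * P) * X * (Q * P) := by noncomm_ring
      _ = _ := by rw [hQP]; simp
  have hDΛ : D = Q * Λ * P := by rw [hΛ, i2]
  obtain ⟨A, B, h1, h2, h3⟩ := diag_case_aux n D.diag (Q * Υ * P) (fun l => Q * K l * P)
    (by
      intro l
      simp only [c1]
      rw [hKrec, mul_sub, sub_mul])
    (by
      intro l
      rw [hDd, hDΛ]
      simp only [c1]
      rw [← sub_mul, ← mul_sub, hcomm]
      simp)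
  rw [hDd] at h2
  refine ⟨P * A * Q, P * B * Q, ?_, ?_, ?_⟩
  · rw [← add_mul, ← mul_add, ← h1, i1]
  · rw [hΛ, c2, c2, ← sub_mul, ← mul_sub, h2]
  · intro l
    rw [← i1 (K l), c2, c2, ← sub_mul, ← mul_sub, h3 l]
    simp
end

section
/- Let F be a field of characteristic zero, n ≥ 1, and let Λ, Υ, W ∈ M_n(F). Set K₀ := W and K_{l+1} := [Υ, K_l] for l ∈ ℕ, and suppose [Λ, K_l] = (l+2)·K_l for every l ∈ ℕ. Then there exists an invertible matrix M ∈ M_n(F) such that for every l ∈ ℕ the matrix M·K_l·M^{-1} is strictly upper triangular, i.e. its (i, j) entry vanishes whenever i ≥ j. (In the paper: the Lie algebra generated by the K_l consists of nilpotent matrices and, by Engel's theorem, all K_l can be simultaneously brought to strictly upper triangular form, so modulo SL(n, F)-equivalence the matrix-valued function V(t) = e^{tΥ}We^{−tΥ} is a polynomial in t with strictly upper triangular matrix coefficients.) -/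
lemma aux_bound {F : Type*} [Field F] [CharZero F] {n : ℕ} (Λ : Matrix (Fin n) (Fin n) F) :
    ∃ N : ℕ, ∀ (c : ℕ) (A : Matrix (Fin n) (Fin n) F), N ≤ c →
      Λ * A - A * Λ = (c : F) • A → A = 0 := by
  let T : Module.End F (Matrix (Fin n) (Fin n) F) :=
    LinearMap.mulLeft F Λ - LinearMap.mulRight F Λ
  have hfin : {c : ℕ | T.HasEigenvalue (c : F)}.Finite :=
    (Module.End.finite_hasEigenvalue T).preimage (Nat.cast_injective.injOn)
  obtain ⟨N, hN⟩ := hfin.bddAbove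
  refine ⟨N + 1, fun c A hc hA => ?_⟩
  by_contra h0
  have : T.HasEigenvalue (c : F) := by
    apply Module.End.hasEigenvalue_of_hasEigenvector (x := A)
    refine ⟨?_, h0⟩
    rw [Module.End.mem_eigenspace_iff]
    simpa [T] using hA
  have := hN this
  omega

lemma aux_vec {F : Type*} [Field F] [CharZero F] {n : ℕ}
    (Λ : Matrix (Fin n) (Fin n) F) (K : ℕ → Matrix (Fin n) (Fin n) F)
    (hcomm : ∀ l : ℕ, Λ * K l - K l * Λ = ((l : F) + 2) • K l)
    (N : ℕ) (hN : ∀ (c : ℕ) (A : Matrix (Fin n) (Fin n) F), N ≤ c →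
      Λ * A - A * Λ = (c : F) • A → A = 0)
    (U : Submodule F (Fin n → F)) (v : Fin n → F) (m : ℕ) :
    ∀ (c : ℕ) (A : Matrix (Fin n) (Fin n) F), N ≤ c + m →
      Λ * A - A * Λ = (c : F) • A → A.mulVec v ∉ U →
      ∃ w, w ∉ U ∧ ∀ l, (K l).mulVec w ∈ U := by
  induction m with
  | zero =>
    intro c A hc hA hv
    rw [hN c A hc hA] at hv
    simp at hv
  | succ m ih =>
    intro c A hc hA hv
    by_cases h : ∀ l, (K l).mulVec (A.mulVec v) ∈ U
    · exact ⟨_, hv, h⟩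
    · push Not at h
      obtain ⟨l, hl⟩ := h
      refine ih (c + l + 2) (K l * A) (by omega) ?_ (by simpa using hl)
      have e : Λ * (K l * A) - K l * A * Λ
          = (Λ * K l - K l * Λ) * A + K l * (Λ * A - A * Λ) := by noncomm_ring
      rw [e, hcomm, hA, Matrix.smul_mul, Matrix.mul_smul, ← add_smul]
      congr 1
      push_cast
      ring

lemma aux_flag {F : Type*} [Field F] {n : ℕ} (K : ℕ → Matrix (Fin n) (Fin n) F)
    (h : ∀ U : Submodule F (Fin n → F), U ≠ ⊤ → ∃ w, w ∉ U ∧ ∀ l, (K l).mulVec w ∈ U)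
    (k : ℕ) : k ≤ n → ∃ b : Fin k → (Fin n → F), LinearIndependent F b ∧
      ∀ l j, (K l).mulVec (b j) ∈ Submodule.span F (b '' {i | i < j}) := by
  induction k with
  | zero => exact fun _ => ⟨Fin.elim0, linearIndependent_empty_type, fun _ j => j.elim0⟩
  | succ k ih =>
    intro hk
    obtain ⟨b, hb, hK⟩ := ih (by omega)
    obtain ⟨w, hw, hwK⟩ := h (Submodule.span F (Set.range b)) (by
      intro ht
      have := finrank_span_eq_card hb
      rw [ht] at this
      simp at this
      omega)
    refine ⟨Fin.snoc b w, linearIndependent_finSnoc.2 ⟨hb, hw⟩, fun l j => ?_⟩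
    refine Fin.lastCases ?_ (fun j => ?_) j
    · rw [Fin.snoc_last]
      refine Submodule.span_mono ?_ (hwK l)
      rintro _ ⟨i, rfl⟩
      exact ⟨i.castSucc, Fin.castSucc_lt_last i, by simp⟩
    · rw [Fin.snoc_castSucc]
      refine Submodule.span_mono ?_ (hK l j)
      rintro _ ⟨i, hi, rfl⟩
      exact ⟨i.castSucc, by simpa using hi, by simp⟩

/-- If `[Λ, K_l] = (l+2)·K_l` for the sequence `K₀ = W`, `K_{l+1} = [Υ, K_l]`, then there
is an invertible matrix `M` conjugating all the `K_l` simultaneously to strictly upper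
triangular form (the `(i, j)` entry of `M K_l M⁻¹` vanishes whenever `i ≥ j`). -/
theorem simultaneous_strict_upper_triangularization (F : Type*) [Field F] [CharZero F]
    (n : ℕ) (hn : 1 ≤ n)
    (Λ Υ W : Matrix (Fin n) (Fin n) F)
    (K : ℕ → Matrix (Fin n) (Fin n) F)
    (hK0 : K 0 = W) (hKrec : ∀ l, K (l + 1) = Υ * K l - K l * Υ)
    (hcomm : ∀ l : ℕ, Λ * K l - K l * Λ = ((l : F) + 2) • K l) :
    ∃ M : Matrix (Fin n) (Fin n) F, IsUnit M.det ∧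
      ∀ (l : ℕ) (i j : Fin n), j ≤ i → (M * K l * M⁻¹) i j = 0 := by
  obtain ⟨N, hN⟩ := aux_bound Λ
  obtain ⟨b, hb, hK⟩ := aux_flag K (fun U hU => by
    obtain ⟨v, hv⟩ : ∃ v, v ∉ U := by
      by_contra hc
      push Not at hc
      exact hU (Submodule.eq_top_iff'.2 hc)
    exact aux_vec Λ K hcomm N hN U v N 0 1 (by omega) (by simp) (by simpa using hv)) n le_rfl
  let B : Matrix (Fin n) (Fin n) F := (Matrix.of b).transpose
  have hB : IsUnit B := Matrix.linearIndependent_cols_iff_isUnit.1 hb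
  have hBd : IsUnit B.det := (Matrix.isUnit_iff_isUnit_det _).1 hB
  refine ⟨B⁻¹, Matrix.isUnit_nonsing_inv_det _ hBd, fun l i j hij => ?_⟩
  rw [Matrix.nonsing_inv_nonsing_inv _ hBd, Matrix.mul_assoc]
  have key : ∀ x ∈ Submodule.span F (b '' {i | i < j}), (B⁻¹.mulVec x) i = 0 := by
    intro x hx
    induction hx using Submodule.span_induction with
    | mem x hx =>
      obtain ⟨k, hk, rfl⟩ := hx
      have e : (B⁻¹ * B) i k = 0 := by
        rw [Matrix.nonsing_inv_mul _ hBd]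
        exact Matrix.one_apply_ne (lt_of_lt_of_le hk hij).ne'
      exact e
    | zero => simp
    | add x y _ _ hx hy => simp [Matrix.mulVec_add, hx, hy]
    | smul a x _ hx => simp [Matrix.mulVec_smul, hx]
  exact key _ (hK l j)
end

section
/- Let n ≥ 1 and let Υ, W, Γ ∈ M_n(ℝ). Set K₀ := W and K_{l+1} := [Υ, K_l] for l ∈ ℕ, and suppose [Γ, K_l] = 0 for all l ∈ ℕ. Then exp(t(Υ + Γ))·W·exp(−t(Υ + Γ)) = exp(tΥ)·W·exp(−tΥ) for all t ∈ ℝ. (In the paper: the matrix Υ parametrizing the Lie-symmetry vector field ∂_t + Υx∂_x of the system x_tt = e^{tΥ}We^{−tΥ}x is defined only up to adding an arbitrary matrix from the centralizer 𝔰 of {K_l}.) -/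
open NormedSpace

section helper
variable {𝔸 : Type*} [NormedRing 𝔸] [NormedAlgebra ℝ 𝔸] [CompleteSpace 𝔸]

theorem aux_mul (S T : 𝔸 →L[ℝ] 𝔸) (x : 𝔸) : (S * T) x = S (T x) := rfl

theorem aux_congr {f g : ℕ → 𝔸} {a : 𝔸} (h : ∀ k, f k = g k) : HasSum f a ↔ HasSum g a := by
  rw [funext h]

theorem aux_hasSum (T : 𝔸 →L[ℝ] 𝔸) (x : 𝔸) :
    HasSum (fun k : ℕ => ((k.factorial : ℝ)⁻¹) • (T ^ k) x) (exp T x) := by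
  have h := NormedSpace.exp_series_hasSum_exp' (𝕂 := ℝ) T
  exact h.mapL (ContinuousLinearMap.apply ℝ 𝔸 x)

theorem aux_left (A x : 𝔸) : exp (ContinuousLinearMap.mul ℝ 𝔸 A) x = exp A * x := by
  refine (aux_hasSum _ x).unique ?_
  have h := (NormedSpace.exp_series_hasSum_exp' (𝕂 := ℝ) A).mul_right x
  refine (aux_congr fun k => ?_).mpr h
  rw [smul_mul_assoc]
  congr 1
  induction k with
  | zero => simp
  | succ k ih => rw [pow_succ', pow_succ', aux_mul, ih]; simp [mul_assoc]

theorem aux_right (A x : 𝔸) : exp ((ContinuousLinearMap.mul ℝ 𝔸).flip A) x = x * exp A := by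
  refine (aux_hasSum _ x).unique ?_
  have h := (NormedSpace.exp_series_hasSum_exp' (𝕂 := ℝ) A).mul_left x
  refine (aux_congr fun k => ?_).mpr h
  rw [mul_smul_comm]
  congr 1
  induction k with
  | zero => simp
  | succ k ih => rw [pow_succ', pow_succ, aux_mul, ih]; simp [mul_assoc]

theorem aux_conj_s13 (A x : 𝔸) :
    exp A * x * exp (-A) =
      exp (ContinuousLinearMap.mul ℝ 𝔸 A + (ContinuousLinearMap.mul ℝ 𝔸).flip (-A)) x := by
  letI : NormedAlgebra ℚ (𝔸 →L[ℝ] 𝔸) := NormedAlgebra.restrictScalars ℚ ℝ _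
  rw [NormedSpace.exp_add_of_commute, aux_mul, aux_right, aux_left, mul_assoc]
  ext y
  simp [mul_assoc]

theorem aux_main (U W G : 𝔸) (K : ℕ → 𝔸)
    (hK0 : K 0 = W) (hKrec : ∀ l, K (l + 1) = U * K l - K l * U)
    (hG : ∀ l : ℕ, G * K l - K l * G = 0) (t : ℝ) :
    exp (t • (U + G)) * W * exp (-(t • (U + G))) = exp (t • U) * W * exp (-(t • U)) := by
  rw [aux_conj_s13, aux_conj_s13]
  refine (aux_hasSum _ W).unique ?_
  have key : ∀ B : 𝔸, (∀ l, K (l + 1) = B * K l - K l * B) → ∀ k : ℕ,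
      ((ContinuousLinearMap.mul ℝ 𝔸 (t • B) +
        (ContinuousLinearMap.mul ℝ 𝔸).flip (-(t • B))) ^ k) W = t ^ k • K k := by
    intro B hB k
    induction k with
    | zero => simp [hK0]
    | succ k ih =>
      rw [pow_succ', aux_mul, ih, hB, pow_succ]
      simp [smul_smul, smul_sub, sub_eq_add_neg, mul_comm]
  refine (aux_congr fun k => ?_).mp (aux_hasSum _ W)
  rw [key U hKrec, key (U + G)]
  intro l
  rw [hKrec, add_mul, mul_add, add_sub_add_comm, hG, add_zero]

end helper

/-- If `Γ` centralizes all the matrices `K_l` (where `K₀ = W`, `K_{l+1} = [Υ, K_l]`),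
then conjugating `W` by `e^{t(Υ+Γ)}` gives the same result as conjugating by `e^{tΥ}`:
the matrix `Υ` is defined only up to adding an element of the centralizer of `{K_l}`. -/
theorem conjugation_invariant_under_centralizer_shift (n : ℕ) (hn : 1 ≤ n)
    (Υ W Γ : Matrix (Fin n) (Fin n) ℝ)
    (K : ℕ → Matrix (Fin n) (Fin n) ℝ)
    (hK0 : K 0 = W) (hKrec : ∀ l, K (l + 1) = Υ * K l - K l * Υ)
    (hΓ : ∀ l : ℕ, Γ * K l - K l * Γ = 0) :
    ∀ t : ℝ,
      exp (t • (Υ + Γ)) * W * exp (-(t • (Υ + Γ))) =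
        exp (t • Υ) * W * exp (-(t • Υ)) := by
  letI : NormedRing (Matrix (Fin n) (Fin n) ℝ) := Matrix.linftyOpNormedRing
  letI : NormedAlgebra ℝ (Matrix (Fin n) (Fin n) ℝ) := Matrix.linftyOpNormedAlgebra
  exact aux_main Υ W Γ K hK0 hKrec hΓ
end

section
/- Let n ≥ 1, let Υ, V₀ ∈ M_n(ℝ), and define V(t) := exp(tΥ)·V₀·exp(−tΥ). Suppose x : ℝ → ℝⁿ is twice differentiable with x''(t) = V(t)·x(t) for all t. Then y(t) := exp(−tΥ)·x(t) is twice differentiable and satisfies y''(t) = −2·Υ·y'(t) + (V₀ − Υ²)·y(t) for all t ∈ ℝ. (In the paper: any t-shift-invariant system x_tt = e^{tΥ}V(0)e^{−tΥ}x is mapped by the point transformation x̃ = e^{−tΥ}x to the constant-coefficient system x̃_tt = −2Υx̃_t + (V(0) − Υ²)x̃, and hence is easily integrable.) -/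
open NormedSpace

open scoped Matrix in
attribute [local instance] Matrix.linftyOpNormedRing Matrix.linftyOpNormedAlgebra in
theorem entry_deriv_aux {n : ℕ} (A : Matrix (Fin n) (Fin n) ℝ) (t : ℝ) (i j : Fin n) :
    HasDerivAt (fun s : ℝ => (exp (-(s • A))) i j) ((-(A * exp (-(t • A)))) i j) t := by
  have h := hasDerivAt_exp_smul_const' (𝕂 := ℝ) (-A) t
  simp only [smul_neg, neg_mul] at h
  exact ((Matrix.entryLinearMap ℝ ℝ i j).toContinuousLinearMap.hasFDerivAt).comp_hasDerivAt t h

theorem mulVec_deriv_aux {n : ℕ} (A : Matrix (Fin n) (Fin n) ℝ) (v : ℝ → Fin n → ℝ)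
    (v' : Fin n → ℝ) (t : ℝ) (hv : HasDerivAt v v' t) :
    HasDerivAt (fun s : ℝ => (exp (-(s • A))).mulVec (v s))
      (-(A.mulVec ((exp (-(t • A))).mulVec (v t))) + (exp (-(t • A))).mulVec v') t := by
  rw [hasDerivAt_pi] at hv ⊢
  intro i
  have h := HasDerivAt.fun_sum (u := Finset.univ)
    (fun j _ => (entry_deriv_aux A t i j).mul (hv j))
  convert! h using 1
  rw [Finset.sum_add_distrib, Matrix.mulVec_mulVec, ← Matrix.neg_mulVec]
  rfl

theorem exp_cancel_aux {n : ℕ} (A : Matrix (Fin n) (Fin n) ℝ) :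
    exp (-A) * exp A = 1 := by
  rw [← Matrix.exp_add_of_commute _ _ (Commute.neg_left (Commute.refl A)), neg_add_cancel,
    NormedSpace.exp_zero]

/-- Any `t`-shift-invariant system `x'' = e^{tΥ} V₀ e^{−tΥ} x` is mapped by the point
transformation `y = e^{−tΥ} x` to the constant-coefficient system
`y'' = −2Υ y' + (V₀ − Υ²) y`. -/
theorem reduction_to_constant_coefficients (n : ℕ) (hn : 1 ≤ n)
    (Υ V₀ : Matrix (Fin n) (Fin n) ℝ)
    (x x' x'' : ℝ → Fin n → ℝ)
    (hx1 : ∀ t, HasDerivAt x (x' t) t)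
    (hx2 : ∀ t, HasDerivAt x' (x'' t) t)
    (hxeq : ∀ t, x'' t = (exp (t • Υ) * V₀ * exp (-(t • Υ))).mulVec (x t)) :
    ∃ y' y'' : ℝ → Fin n → ℝ,
      (∀ t, HasDerivAt (fun s => (exp (-(s • Υ))).mulVec (x s)) (y' t) t) ∧
      (∀ t, HasDerivAt y' (y'' t) t) ∧
      ∀ t, y'' t =
        ((-2 : ℝ) • Υ).mulVec (y' t) +
          (V₀ - Υ * Υ).mulVec ((exp (-(t • Υ))).mulVec (x t)) := by
  have hd : ∀ (v w : ℝ → Fin n → ℝ), (∀ t, HasDerivAt v (w t) t) → ∀ t, _ :=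
    fun v w h t => mulVec_deriv_aux Υ v (w t) t (h t)
  refine ⟨_, fun t => -(Υ.mulVec (-(Υ.mulVec ((exp (-(t • Υ))).mulVec (x t)))
        + (exp (-(t • Υ))).mulVec (x' t)))
      + (-(Υ.mulVec ((exp (-(t • Υ))).mulVec (x' t))) + (exp (-(t • Υ))).mulVec (x'' t)),
    hd x x' hx1, fun t => ?_, fun t => ?_⟩
  · have h1 := hd x x' hx1 t
    have h2 := hd x' x'' hx2 t
    have h3 := ((Matrix.mulVecLin Υ).toContinuousLinearMap.hasFDerivAt).comp_hasDerivAt t h1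
    exact h3.neg.add h2
  · have h : (exp (-(t • Υ))).mulVec (x'' t) = V₀.mulVec ((exp (-(t • Υ))).mulVec (x t)) := by
      rw [hxeq, Matrix.mulVec_mulVec, Matrix.mulVec_mulVec, ← mul_assoc, ← mul_assoc,
        exp_cancel_aux, one_mul]
    simp only [h, Matrix.sub_mulVec, Matrix.smul_mulVec, Matrix.mulVec_add, Matrix.mulVec_neg,
      ← Matrix.mulVec_mulVec]
    module
end
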